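/- Let α ∈ (2,3), n ≥ 2, and let γ₀ ∈ H^{(1+α)/2,2}(ℝ/ℤ,ℝⁿ) be injective and regular. Then there exist an open neighborhood U of γ₀ in H^{(1+α)/2,2}(ℝ/ℤ,ℝⁿ) consisting of injective regular curves and a constant C < ∞ with the following property: for every δ ∈ [0,1] and every set X_δ ⊂ H^{(1+α)/2,2}(ℝ/ℤ,ℝⁿ) satisfying limsup_{ε→0} sup_{γ∈X_δ} (∬_{(ℝ/ℤ)×[−ε,ε]} |γ'(u+w)−γ'(u)|²/|w|^α dw du)^{1/2} ≤ δ, one has limsup_{ε₁,ε₂→0} Lip_{U∩X_δ}(E^α_{ε₁} − E^α_{ε₂}) ≤ C·δ, where Lip_Y(F) := sup{ |F(f)−F(g)|/‖f−g‖_{H^{(1+α)/2,2}} : f,g ∈ Y, f ≠ g }. -/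

import Mathlib

open MeasureTheory Filter Set
open scoped RealInnerProductSpace ENNReal Topology

noncomputable section

/-- `ℝⁿ` -/
abbrev Rn (n : ℕ) := EuclideanSpace ℝ (Fin n)

variable {n : ℕ}

/-- A 1-periodic curve is injective as a map on `ℝ/ℤ`. -/
def PerInjective (γ : ℝ → Rn n) : Prop :=
  ∀ u v : ℝ, γ u = γ v → ∃ k : ℤ, v = u + k

/-- `γ` is a regular curve: `γ'(u) ≠ 0` for all `u`. -/
def RegularCurve (γ : ℝ → Rn n) : Prop := ∀ u : ℝ, deriv γ u ≠ 0

/-- `γ` is parametrized by arc-length: `|γ'(u)| = 1` for all `u`. -/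
def ArcLengthParam (γ : ℝ → Rn n) : Prop := ∀ u : ℝ, ‖deriv γ u‖ = 1

/-- The length `L(γ) = ∫₀¹ |γ'(θ)| dθ` of the closed curve `γ`. -/
def curveLen (γ : ℝ → Rn n) : ℝ := ∫ θ in (0:ℝ)..1, ‖deriv γ θ‖

/-- The arc length `L(γ|_{[u,u+w]}) = |∫_u^{u+w} |γ'(θ)| dθ|`. -/
def arcLen (γ : ℝ → Rn n) (u w : ℝ) : ℝ := |∫ θ in u..(u + w), ‖deriv γ θ‖|

/-- The intrinsic distance `d_γ(u+w,u)`. -/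
def idist (γ : ℝ → Rn n) (u w : ℝ) : ℝ :=
  min (arcLen γ u w) (curveLen γ - arcLen γ u w)

/-- The integrand of the O'Hara energy `E^α`. -/
def ohIntegrand (α : ℝ) (γ : ℝ → Rn n) (u w : ℝ) : ℝ :=
  (1 / ‖γ (u + w) - γ u‖ ^ α - 1 / idist γ u w ^ α) * ‖deriv γ (u + w)‖ * ‖deriv γ u‖

/-- The O'Hara energy `E^α`, with values in `[0,∞]`. -/
def oharaE (α : ℝ) (γ : ℝ → Rn n) : ℝ≥0∞ :=
  ∫⁻ u in Ioc (0:ℝ) 1, ∫⁻ w in Ioo (-(1:ℝ)/2) (1/2), ENNReal.ofReal (ohIntegrand α γ u w)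

/-- The O'Hara energy `E^α` as a real number. -/
def oharaER (α : ℝ) (γ : ℝ → Rn n) : ℝ := (oharaE α γ).toReal

/-- `[−1/2,−ε] ∪ [ε,1/2]`, the `w`-section of `U_ε`. -/
def Wset (ε : ℝ) : Set ℝ := Icc (-(1:ℝ)/2) (-ε) ∪ Icc ε (1/2)

/-- The truncated O'Hara energy `E^α_ε`, an integral over `U_ε`. -/
def oharaEeps (α ε : ℝ) (γ : ℝ → Rn n) : ℝ :=
  ∫ u in Ioc (0:ℝ) 1, ∫ w in Wset ε, ohIntegrand α γ u w

/-- `F` has directional (Gâteaux) derivative `d` at `γ` in direction `h`. -/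
def HasDirDeriv (F : (ℝ → Rn n) → ℝ) (γ h : ℝ → Rn n) (d : ℝ) : Prop :=
  Tendsto (fun τ : ℝ => (F (γ + τ • h) - F γ) / τ) (𝓝[≠] (0:ℝ)) (𝓝 d)

/-- Squared Gagliardo seminorm `[f]²_{H^{s,2}}` of a 1-periodic map. -/
def gagliardoSq (s : ℝ) {E : Type*} [NormedAddCommGroup E] (f : ℝ → E) : ℝ≥0∞ :=
  ∫⁻ u in Ioc (0:ℝ) 1, ∫⁻ w in Ioo (-(1:ℝ)/2) (1/2),
    ENNReal.ofReal (‖f (u + w) - f u‖ ^ 2 / |w| ^ (1 + 2 * s))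

/-- Membership in the fractional Sobolev space `H^{1+σ,2}(ℝ/ℤ,ℝⁿ)`, `σ ∈ (0,1)`:
a 1-periodic `C¹` function whose derivative has finite Gagliardo seminorm of order `σ`. -/
def MemH1 (σ : ℝ) (γ : ℝ → Rn n) : Prop :=
  Function.Periodic γ 1 ∧ ContDiff ℝ 1 γ ∧ gagliardoSq σ (deriv γ) < ⊤

/-- The norm of `H^{1+σ,2}(ℝ/ℤ,ℝⁿ)`. -/
def H1Norm (σ : ℝ) (γ : ℝ → Rn n) : ℝ :=
  Real.sqrt (∫ u in Ioc (0:ℝ) 1, (‖γ u‖ ^ 2 + ‖deriv γ u‖ ^ 2)) +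
    Real.sqrt ((gagliardoSq σ (deriv γ)).toReal)

/-- Membership of a 1-periodic map in `L²(ℝ/ℤ)`. -/
def MemL2per {E : Type*} [NormedAddCommGroup E] (f : ℝ → E) : Prop :=
  Function.Periodic f 1 ∧ AEStronglyMeasurable f (volume : Measure ℝ) ∧
    IntegrableOn (fun u => ‖f u‖ ^ 2) (Ioc (0:ℝ) 1) volume

/-- Membership in the fractional Sobolev space `H^{s,2}(ℝ/ℤ)`, `s ∈ (0,1)`. -/
def MemHs0 (s : ℝ) {E : Type*} [NormedAddCommGroup E] (f : ℝ → E) : Prop :=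
  MemL2per f ∧ gagliardoSq s f < ⊤

/-- The norm of `H^{s,2}(ℝ/ℤ)` for `s ∈ (0,1)`: `‖f‖_{L²} + [f]_{H^{s,2}}`. -/
def Hs0Norm (s : ℝ) {E : Type*} [NormedAddCommGroup E] (f : ℝ → E) : ℝ :=
  Real.sqrt (∫ u in Ioc (0:ℝ) 1, ‖f u‖ ^ 2) + Real.sqrt ((gagliardoSq s f).toReal)

/-- The `k`-th Fourier coefficient (`j`-th component) of a 1-periodic curve. -/
def fCoef (γ : ℝ → Rn n) (k : ℤ) (j : Fin n) : ℂ :=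
  ∫ u in (0:ℝ)..1, (γ u j : ℂ) * Complex.exp ((-2) * (Real.pi : ℂ) * Complex.I * (k : ℂ) * (u : ℂ))

/-- Membership in `H^{s,2}(ℝ/ℤ,ℝⁿ)` via the Fourier characterization:
`((1+|k|²)^{s/2} γ̂(k))_k ∈ ℓ²`. -/
def MemHF (s : ℝ) (γ : ℝ → Rn n) : Prop :=
  Function.Periodic γ 1 ∧ Continuous γ ∧
    Summable (fun k : ℤ => (1 + (k : ℝ) ^ 2) ^ s * ∑ j, ‖fCoef γ k j‖ ^ 2)

/-- The squared Fourier norm of `H^{s,2}(ℝ/ℤ,ℝⁿ)`. -/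
def fNormSq (s : ℝ) (γ : ℝ → Rn n) : ℝ :=
  ∑' k : ℤ, (1 + (k : ℝ) ^ 2) ^ s * ∑ j, ‖fCoef γ k j‖ ^ 2

/-- C¹-norm of a 1-periodic map. -/
def c1Norm (f : ℝ → Rn n) : ℝ := ⨆ u : Icc (0:ℝ) 1, (‖f u.1‖ + ‖deriv f u.1‖)

/-- The integrand of `Q(γ,h)`. -/
def Qintegrand (α : ℝ) (γ h : ℝ → Rn n) (u w : ℝ) : ℝ :=
  ⟪deriv γ u, deriv h u⟫ / |w| ^ α
    - ⟪γ (u + w) - γ u, h (u + w) - h u⟫ / |w| ^ (α + 2)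

/-- The integrand of `R(γ,h)`. -/
def Rintegrand (α : ℝ) (γ h : ℝ → Rn n) (u w : ℝ) : ℝ :=
  2 * ⟪deriv γ u, deriv h u⟫ * (1 / ‖γ (u + w) - γ u‖ ^ α - 1 / |w| ^ α)
    - α * ⟪γ (u + w) - γ u, h (u + w) - h u⟫ *
        (1 / ‖γ (u + w) - γ u‖ ^ (α + 2) - 1 / |w| ^ (α + 2))

/-- `R(γ,h)`, an absolutely convergent double integral over `(ℝ/ℤ) × [−1/2,1/2]`. -/
def Rval (α : ℝ) (γ h : ℝ → Rn n) : ℝ :=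
  ∫ p in (Ioc (0:ℝ) 1) ×ˢ (Icc (-(1:ℝ)/2) (1/2)), Rintegrand α γ h p.1 p.2

/-! For small `w` the intrinsic distance is the arc length, so `E^α_{ε₁} - E^α_{ε₂}` is an integral
over `ε₁ ≤ |w| < ε₂` of `|w| ^ (-α)` times `‖∫ v‖ ^ (-α) - (∫ ‖v‖) ^ (-α)` times two speeds, where
`v` is the velocity along the segment from `u` to `u + w`. The gap `∫ ‖v‖ - ‖∫ v‖` is quadratic in
the oscillation of `v`. Its change from `f` to `g` is bilinear in the oscillation of `f' - g'` and
in those of `f'`, `g'`, up to terms quadratic in the latter that carry a factor `sup ‖f' - g'‖`.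
Divided by `|w| ^ α` and integrated, oscillations become Gagliardo seminorms near the diagonal: for
`f'` and `g'` these are at most `δ + η`, for `f' - g'` at most the norm of `f - g`, which also
controls `sup ‖f' - g'‖` because `α > 2`. The products are split by weighted AM-GM, the weight `l`
being the ratio of the two seminorm bounds. -/

section SecondDifferences

variable {E F : Type*} [NormedAddCommGroup E] [NormedSpace ℝ E] [NormedAddCommGroup F]
  [NormedSpace ℝ F]

lemma norm_image_sub_sub_image_sub_le {φ : E → F} {φ' : E → E →L[ℝ] F} {s : Set E}
    (hs : Convex ℝ s) {C₁ C₂ : ℝ} (hφ : ∀ z ∈ s, HasFDerivAt φ (φ' z) z)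
    (h₁ : ∀ z ∈ s, ‖φ' z‖ ≤ C₁) (h₂ : ∀ z ∈ s, ∀ z' ∈ s, ‖φ' z - φ' z'‖ ≤ C₂ * ‖z - z'‖)
    (hC₂ : 0 ≤ C₂) {x y x' y' : E} (hx : x ∈ s) (hy : y ∈ s) (hx' : x' ∈ s) (hy' : y' ∈ s) :
    ‖(φ x - φ y) - (φ x' - φ y')‖ ≤
      C₁ * ‖(x - y) - (x' - y')‖ + C₂ * (‖x - x'‖ + ‖y - y'‖) * ‖x - y‖ := by
  have hmem : ∀ {p q : E}, p ∈ s → q ∈ s → ∀ t ∈ Icc (0 : ℝ) 1, q + t • (p - q) ∈ s :=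
    fun hp hq t ht => hs.add_smul_sub_mem hq hp ht
  have hpath : ∀ {p q : E}, p ∈ s → q ∈ s → ∀ t ∈ Icc (0 : ℝ) 1,
      HasDerivAt (fun t : ℝ => φ (q + t • (p - q))) (φ' (q + t • (p - q)) (p - q)) t :=
    fun {p q} hp hq t ht => (hφ _ (hmem hp hq t ht)).comp_hasDerivAt t
      (by simpa using ((hasDerivAt_id t).smul_const (p - q)).const_add q)
  have hbound : ∀ t ∈ Ico (0 : ℝ) 1,
      ‖φ' (y + t • (x - y)) (x - y) - φ' (y' + t • (x' - y')) (x' - y')‖ ≤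
        C₁ * ‖(x - y) - (x' - y')‖ + C₂ * (‖x - x'‖ + ‖y - y'‖) * ‖x - y‖ := by
    intro t ht
    have hz := hmem hx hy t (Ico_subset_Icc_self ht)
    have hz' := hmem hx' hy' t (Ico_subset_Icc_self ht)
    set z := y + t • (x - y) with z_def
    set z' := y' + t • (x' - y') with z'_def
    have hzz' : ‖z - z'‖ ≤ ‖x - x'‖ + ‖y - y'‖ := by
      rw [show z - z' = t • (x - x') + (1 - t) • (y - y') by rw [z_def, z'_def]; module]
      refine (norm_add_le _ _).trans (add_le_add ?_ ?_) <;> rw [norm_smul]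
      · exact mul_le_of_le_one_left (norm_nonneg _) (abs_le.2 ⟨by linarith [ht.1], ht.2.le⟩)
      · exact mul_le_of_le_one_left (norm_nonneg _)
          (abs_le.2 ⟨by linarith [ht.2], by linarith [ht.1]⟩)
    calc ‖φ' z (x - y) - φ' z' (x' - y')‖
        = ‖φ' z' ((x - y) - (x' - y')) + (φ' z - φ' z') (x - y)‖ := by
          congr 1; simp only [map_sub, sub_apply]; abel
      _ ≤ ‖φ' z'‖ * ‖(x - y) - (x' - y')‖ + ‖φ' z - φ' z'‖ * ‖x - y‖ :=
          (norm_add_le _ _).trans (add_le_add ((φ' z').le_opNorm _) ((φ' z - φ' z').le_opNorm _))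
      _ ≤ _ := by
          gcongr
          · exact h₁ z' hz'
          · exact (h₂ z hz z' hz').trans (by gcongr)
  simpa [sub_sub_sub_comm] using norm_image_sub_le_of_norm_deriv_le_segment_01'
    (f := fun t : ℝ => φ (y + t • (x - y)) - φ (y' + t • (x' - y')))
    (fun t ht => ((hpath hx hy t ht).sub (hpath hx' hy' t ht)).hasDerivWithinAt) hbound

lemma abs_rpow_neg_sub_le {m β : ℝ} (hm : 0 < m) (hβ : 0 ≤ β) {z z' : ℝ} (hz : m ≤ z)
    (hz' : m ≤ z') : |z ^ (-β) - z' ^ (-β)| ≤ β * m ^ (-β - 1) * |z - z'| := by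
  refine (convex_Ici m).norm_image_sub_le_of_norm_hasDerivWithin_le
    (f := fun z : ℝ => z ^ (-β)) (f' := fun z => -β * z ^ (-β - 1))
    (fun x hx => (Real.hasDerivAt_rpow_const (Or.inl (hm.trans_le hx).ne')).hasDerivWithinAt)
    (fun x hx => ?_) hz' hz
  rw [norm_mul, norm_neg, Real.norm_of_nonneg hβ,
    Real.norm_of_nonneg (Real.rpow_nonneg (hm.le.trans hx) _)]
  exact mul_le_mul_of_nonneg_left (Real.rpow_le_rpow_of_nonpos hm hx (by linarith)) hβ

lemma abs_rpow_neg_sub_sub_le {m β : ℝ} (hm : 0 < m) (hβ : 0 ≤ β) {x y x' y' : ℝ}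
    (hx : m ≤ x) (hy : m ≤ y) (hx' : m ≤ x') (hy' : m ≤ y') :
    |(x ^ (-β) - y ^ (-β)) - (x' ^ (-β) - y' ^ (-β))| ≤
      β * m ^ (-β - 1) * |(x - y) - (x' - y')| +
        β * ((β + 1) * m ^ (-β - 2)) * (|x - x'| + |y - y'|) * |x - y| := by
  refine norm_image_sub_sub_image_sub_le (convex_Ici m) (φ := fun z : ℝ => z ^ (-β))
    (φ' := fun z => ContinuousLinearMap.toSpanSingletonLIE ℝ ℝ (-β * z ^ (-β - 1)))
    (fun z hz => Real.hasDerivAt_rpow_const (Or.inl (hm.trans_le hz).ne')) (fun z hz => ?_)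
    (fun z hz z' hz' => ?_) (by positivity) hx hy hx' hy'
  · rw [LinearIsometryEquiv.norm_map, norm_mul, norm_neg, Real.norm_of_nonneg hβ,
      Real.norm_of_nonneg (Real.rpow_nonneg (hm.le.trans hz) _)]
    exact mul_le_mul_of_nonneg_left (Real.rpow_le_rpow_of_nonpos hm hz (by linarith)) hβ
  · have h := abs_rpow_neg_sub_le hm (by linarith : 0 ≤ β + 1) hz hz'
    rw [← map_sub, LinearIsometryEquiv.norm_map, ← mul_sub, norm_mul, norm_neg,
      Real.norm_of_nonneg hβ, mul_assoc, show -β - 1 = -(β + 1) by ring,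
      show -β - 2 = -(β + 1) - 1 by ring]
    exact mul_le_mul_of_nonneg_left h hβ

end SecondDifferences

section NormInequalities

lemma le_mul_sq_add_one_div {l : ℝ} (hl : 0 < l) (N : ℝ) : N ≤ l * N ^ 2 + 1 / l := by
  have hsq : l * N ^ 2 + 1 / l - N = ((l * N - 1 / 2) ^ 2 + 3 / 4) / l := by
    field_simp
    ring
  rw [← sub_nonneg, hsq]
  positivity

lemma abs_norm_sq_sub_norm_sq_le {F : Type*} [NormedAddCommGroup F] {x y : F} {l : ℝ}
    (hl : 0 < l) : |‖x‖ ^ 2 - ‖y‖ ^ 2| ≤ l * ‖x - y‖ ^ 2 + (‖x‖ ^ 2 + ‖y‖ ^ 2) / l := by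
  have hfactor : |‖x‖ ^ 2 - ‖y‖ ^ 2| ≤ ‖x - y‖ * (‖x‖ + ‖y‖) := by
    rw [sq_sub_sq, abs_mul, abs_of_nonneg (by positivity : 0 ≤ ‖x‖ + ‖y‖), mul_comm]
    gcongr
    exact abs_norm_sub_norm_le x y
  refine hfactor.trans ?_
  have hyoung : l * (‖x - y‖ * (‖x‖ + ‖y‖)) ≤ (l * ‖x - y‖) ^ 2 + (‖x‖ ^ 2 + ‖y‖ ^ 2) := by
    nlinarith [sq_nonneg (2 * (l * ‖x - y‖) - (‖x‖ + ‖y‖)), sq_nonneg (‖x‖ - ‖y‖)]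
  rw [← mul_le_mul_iff_right₀ hl]
  refine hyoung.trans_eq ?_
  field_simp

variable {E : Type*} [NormedAddCommGroup E] [InnerProductSpace ℝ E]

lemma norm_add_norm_mul_norm_sub_norm_sub (a b v w : E) :
    (‖a‖ + ‖b‖) * ((‖a‖ - ‖v‖) - (‖b‖ - ‖w‖)) =
      ⟪(a - v) - (b - w), a + b⟫ + ⟪v - w, (a - v) + (b - w)⟫
        - ((‖a‖ - ‖v‖) + (‖b‖ - ‖w‖)) * (‖v‖ - ‖w‖) := by
  have hdiff : ∀ x y : E, (‖x‖ + ‖y‖) * (‖x‖ - ‖y‖) = ⟪x + y, x - y⟫ := fun x y => by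
    rw [inner_add_left, inner_sub_right, inner_sub_right, real_inner_self_eq_norm_sq,
      real_inner_self_eq_norm_sq, real_inner_comm x y]
    ring
  have hinner : ⟪(a - v) - (b - w), a + b⟫ + ⟪v - w, (a - v) + (b - w)⟫ =
      ⟪a + b, a - b⟫ - ⟪v + w, v - w⟫ := by
    simp only [inner_sub_left, inner_add_right, inner_sub_right, inner_add_left]
    simp only [real_inner_comm]
    ring
  rw [hinner]
  linear_combination hdiff a b - hdiff v w

lemma abs_norm_sub_norm_sub_le {a b v w : E} {c : ℝ} (hc : 0 < c) (ha : c ≤ ‖a‖)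
    (hb : c ≤ ‖b‖) :
    |(‖a‖ - ‖v‖) - (‖b‖ - ‖w‖)| ≤
      ‖(a - v) - (b - w)‖ + ‖v - w‖ / c * (‖a - v‖ + ‖b - w‖) := by
  have hS : 0 < ‖a‖ + ‖b‖ := by linarith
  have h₁ : |⟪(a - v) - (b - w), a + b⟫| ≤ (‖a‖ + ‖b‖) * ‖(a - v) - (b - w)‖ := by
    rw [mul_comm]
    exact (abs_real_inner_le_norm _ _).trans (by gcongr; exact norm_add_le _ _)
  have h₂ : |⟪v - w, (a - v) + (b - w)⟫| ≤ ‖v - w‖ * (‖a - v‖ + ‖b - w‖) :=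
    (abs_real_inner_le_norm _ _).trans (by gcongr; exact norm_add_le _ _)
  have h₃ : |((‖a‖ - ‖v‖) + (‖b‖ - ‖w‖)) * (‖v‖ - ‖w‖)| ≤
      ‖v - w‖ * (‖a - v‖ + ‖b - w‖) := by
    rw [abs_mul, mul_comm]
    gcongr
    · exact abs_norm_sub_norm_le _ _
    · exact (abs_add_le _ _).trans
        (add_le_add (abs_norm_sub_norm_le _ _) (abs_norm_sub_norm_le _ _))
  have h₄ : 2 * (‖v - w‖ * (‖a - v‖ + ‖b - w‖)) ≤
      (‖a‖ + ‖b‖) * (‖v - w‖ / c * (‖a - v‖ + ‖b - w‖)) := by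
    calc 2 * (‖v - w‖ * (‖a - v‖ + ‖b - w‖))
        = 2 * c * (‖v - w‖ / c * (‖a - v‖ + ‖b - w‖)) := by field_simp
      _ ≤ _ := by gcongr; linarith
  refine le_of_mul_le_mul_left ?_ hS
  rw [← abs_of_pos hS, ← abs_mul, norm_add_norm_mul_norm_sub_norm_sub, abs_of_pos hS]
  refine (abs_sub _ _).trans ?_
  have := abs_add_le ⟪(a - v) - (b - w), a + b⟫ ⟪v - w, (a - v) + (b - w)⟫
  linarith

lemma sq_norm_sub_norm_sub_le {a b v w : E} {c : ℝ} (hc : 0 < c) (ha : c ≤ ‖a‖)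
    (hb : c ≤ ‖b‖) :
    ((‖a‖ - ‖v‖) - (‖b‖ - ‖w‖)) ^ 2 ≤
      2 * ‖(a - v) - (b - w)‖ ^ 2 + 4 * (‖v - w‖ / c) ^ 2 * (‖a - v‖ ^ 2 + ‖b - w‖ ^ 2) := by
  have h := abs_norm_sub_norm_sub_le (v := v) (w := w) hc ha hb
  set k := ‖v - w‖ / c
  calc ((‖a‖ - ‖v‖) - (‖b‖ - ‖w‖)) ^ 2
      ≤ (‖(a - v) - (b - w)‖ + k * (‖a - v‖ + ‖b - w‖)) ^ 2 := by
        rw [← sq_abs]; gcongr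
    _ ≤ _ := by
        nlinarith [sq_nonneg (‖(a - v) - (b - w)‖ - k * (‖a - v‖ + ‖b - w‖)),
          sq_nonneg (k * (‖a - v‖ - ‖b - w‖))]

end NormInequalities

section MeanSqDev

variable {Ω : Type*} [MeasurableSpace Ω] {μ : Measure Ω}

lemma integrable_norm_sub_sq [IsFiniteMeasure μ] {E : Type*} [NormedAddCommGroup E] {a : Ω → E}
    (ha : MemLp a 2 μ) (v : E) : Integrable (fun ω => ‖a ω - v‖ ^ 2) μ :=
  (ha.sub (memLp_const v)).integrable_norm_pow two_ne_zero

section NormedSpace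

variable {E : Type*} [NormedAddCommGroup E] [NormedSpace ℝ E]

/-- The variance `∫ ‖a - ∫ a‖²` of a vector-valued random variable. The triangle defect
below is the difference of two variances. -/
def meanSqDev (μ : Measure Ω) (a : Ω → E) : ℝ := ∫ ω, ‖a ω - ∫ ω', a ω' ∂μ‖ ^ 2 ∂μ

/-- The defect `(∫ ‖a‖)² - ‖∫ a‖²` in the triangle inequality for integrals. For the velocity of a
curve it compares the squared arc length with the squared chord length. -/
def triangleDefect (μ : Measure Ω) (a : Ω → E) : ℝ := (∫ ω, ‖a ω‖ ∂μ) ^ 2 - ‖∫ ω, a ω ∂μ‖ ^ 2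

lemma meanSqDev_nonneg (a : Ω → E) : 0 ≤ meanSqDev μ a :=
  integral_nonneg fun _ => sq_nonneg _

lemma triangleDefect_nonneg (a : Ω → E) : 0 ≤ triangleDefect μ a :=
  sub_nonneg.2 (pow_le_pow_left₀ (norm_nonneg _) (norm_integral_le_integral_norm a) 2)

end NormedSpace

variable [IsProbabilityMeasure μ] {E : Type*} [NormedAddCommGroup E] [InnerProductSpace ℝ E]

lemma integral_norm_sub_sq [CompleteSpace E] {a : Ω → E} (ha : MemLp a 2 μ) (v : E) :
    ∫ ω, ‖a ω - v‖ ^ 2 ∂μ = meanSqDev μ a + ‖(∫ ω, a ω ∂μ) - v‖ ^ 2 := by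
  set m := ∫ ω, a ω ∂μ with m_def
  have haI : Integrable a μ := ha.integrable one_le_two
  have hcross : ∫ ω, ⟪m - v, a ω - m⟫ ∂μ = 0 := by
    have := integral_inner (𝕜 := ℝ) (haI.sub (integrable_const m)) (m - v)
    simp only [Pi.sub_apply] at this
    rw [this, integral_sub haI (integrable_const m)]
    simp [← m_def]
  have hsq : ∀ ω, ‖a ω - v‖ ^ 2 = ‖a ω - m‖ ^ 2 + (2 * ⟪m - v, a ω - m⟫ + ‖m - v‖ ^ 2) :=
    fun ω => by
      rw [← sub_add_sub_cancel (a ω) m v, norm_add_sq_real, real_inner_comm]; ring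
  have hinner : Integrable (fun ω => 2 * ⟪m - v, a ω - m⟫) μ :=
    ((haI.sub (integrable_const m)).const_inner _).const_mul 2
  have hrest : Integrable (fun ω => 2 * ⟪m - v, a ω - m⟫ + ‖m - v‖ ^ 2) μ :=
    hinner.add (integrable_const _)
  simp_rw [hsq]
  rw [integral_add (integrable_norm_sub_sq ha m) hrest,
    integral_add hinner (integrable_const _), integral_const_mul, hcross]
  simp [meanSqDev, ← m_def]

lemma meanSqDev_eq_sub [CompleteSpace E] {a : Ω → E} (ha : MemLp a 2 μ) :
    meanSqDev μ a = ∫ ω, ‖a ω‖ ^ 2 ∂μ - ‖∫ ω, a ω ∂μ‖ ^ 2 := by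
  simpa using (sub_eq_of_eq_add (integral_norm_sub_sq ha 0)).symm

lemma sq_integral_norm_le_integral_norm_sq {F : Type*} [NormedAddCommGroup F] {a : Ω → F}
    (ha : MemLp a 2 μ) : (∫ ω, ‖a ω‖ ∂μ) ^ 2 ≤ ∫ ω, ‖a ω‖ ^ 2 ∂μ := by
  have h := meanSqDev_nonneg (μ := μ) fun ω => ‖a ω‖
  rw [meanSqDev_eq_sub ha.norm] at h
  simpa only [norm_norm, Real.norm_eq_abs, sq_abs, abs_norm, sub_nonneg] using h

lemma meanSqDev_le_integral_norm_sub_sq [CompleteSpace E] {a : Ω → E} (ha : MemLp a 2 μ) (v : E) :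
    meanSqDev μ a ≤ ∫ ω, ‖a ω - v‖ ^ 2 ∂μ := by
  rw [integral_norm_sub_sq ha v]
  exact le_add_of_nonneg_right (sq_nonneg _)

lemma abs_meanSqDev_sub_le [CompleteSpace E] {a b : Ω → E} (ha : MemLp a 2 μ)
    (hb : MemLp b 2 μ) {l : ℝ} (hl : 0 < l) :
    |meanSqDev μ a - meanSqDev μ b| ≤
      l * meanSqDev μ (a - b) + (meanSqDev μ a + meanSqDev μ b) / l := by
  have ha' := integrable_norm_sub_sq ha (∫ ω, a ω ∂μ)
  have hb' := integrable_norm_sub_sq hb (∫ ω, b ω ∂μ)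
  have hab' := integrable_norm_sub_sq (ha.sub hb) (∫ ω, (a - b) ω ∂μ)
  have hsum : Integrable
      (fun ω => (‖a ω - ∫ ω, a ω ∂μ‖ ^ 2 + ‖b ω - ∫ ω, b ω ∂μ‖ ^ 2) / l) μ :=
    (ha'.add hb').div_const l
  have hmean : ∫ ω, (a - b) ω ∂μ = ∫ ω, a ω ∂μ - ∫ ω, b ω ∂μ :=
    integral_sub (ha.integrable one_le_two) (hb.integrable one_le_two)
  simp only [meanSqDev]
  rw [← integral_sub ha' hb', ← integral_add ha' hb', ← integral_const_mul, ← integral_div,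
    ← integral_add (hab'.const_mul l) hsum]
  refine abs_integral_le_integral_abs.trans (integral_mono (ha'.sub hb').abs
    ((hab'.const_mul l).add hsum) fun ω => ?_)
  rw [hmean, Pi.sub_apply, ← sub_sub_sub_comm (a ω)]
  exact abs_norm_sq_sub_norm_sq_le hl

lemma triangleDefect_eq_meanSqDev_sub [CompleteSpace E] {a : Ω → E} (ha : MemLp a 2 μ) :
    triangleDefect μ a = meanSqDev μ a - meanSqDev μ (fun ω => ‖a ω‖) := by
  rw [meanSqDev_eq_sub ha, meanSqDev_eq_sub ha.norm, triangleDefect]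
  simp only [Real.norm_eq_abs, sq_abs]
  ring

lemma triangleDefect_le_integral_norm_sub_sq [CompleteSpace E] {a : Ω → E} (ha : MemLp a 2 μ)
    (v : E) :
    triangleDefect μ a ≤ ∫ ω, ‖a ω - v‖ ^ 2 ∂μ := by
  rw [triangleDefect_eq_meanSqDev_sub ha]
  exact (sub_le_self _ (meanSqDev_nonneg _)).trans (meanSqDev_le_integral_norm_sub_sq ha v)

lemma meanSqDev_norm_le {F : Type*} [NormedAddCommGroup F] {a : Ω → F}
    (ha : MemLp a 2 μ) (v : F) :
    meanSqDev μ (fun ω => ‖a ω‖) ≤ ∫ ω, ‖a ω - v‖ ^ 2 ∂μ := by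
  refine (meanSqDev_le_integral_norm_sub_sq ha.norm ‖v‖).trans
    (integral_mono (integrable_norm_sub_sq ha.norm _) (integrable_norm_sub_sq ha v) fun ω => ?_)
  exact pow_le_pow_left₀ (norm_nonneg _) (abs_norm_sub_norm_le _ _) 2

lemma meanSqDev_norm_sub_norm_le {a b : Ω → E} (ha : MemLp a 2 μ) (hb : MemLp b 2 μ) {c : ℝ}
    (hc : 0 < c) (hac : ∀ᵐ ω ∂μ, c ≤ ‖a ω‖) (hbc : ∀ᵐ ω ∂μ, c ≤ ‖b ω‖) (v w : E) :
    meanSqDev μ ((fun ω => ‖a ω‖) - fun ω => ‖b ω‖) ≤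
      2 * ∫ ω, ‖(a ω - v) - (b ω - w)‖ ^ 2 ∂μ + 4 * (‖v - w‖ / c) ^ 2 *
        (∫ ω, ‖a ω - v‖ ^ 2 ∂μ + ∫ ω, ‖b ω - w‖ ^ 2 ∂μ) := by
  have ha' := integrable_norm_sub_sq ha v
  have hb' := integrable_norm_sub_sq hb w
  have hab' : Integrable (fun ω => ‖(a ω - v) - (b ω - w)‖ ^ 2) μ :=
    ((ha.sub (memLp_const v)).sub (hb.sub (memLp_const w))).integrable_norm_pow two_ne_zero
  have hsum : Integrable
      (fun ω => 4 * (‖v - w‖ / c) ^ 2 * (‖a ω - v‖ ^ 2 + ‖b ω - w‖ ^ 2)) μ :=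
    (ha'.add hb').const_mul _
  refine (meanSqDev_le_integral_norm_sub_sq (ha.norm.sub hb.norm) (‖v‖ - ‖w‖)).trans ?_
  rw [← integral_add ha' hb', ← integral_const_mul, ← integral_const_mul,
    ← integral_add (hab'.const_mul 2) hsum]
  refine integral_mono_ae (integrable_norm_sub_sq (ha.norm.sub hb.norm) _)
    ((hab'.const_mul 2).add hsum) ?_
  filter_upwards [hac, hbc] with ω ha hb
  rw [Pi.sub_apply, Real.norm_eq_abs, sq_abs, sub_sub_sub_comm]
  exact sq_norm_sub_norm_sub_le hc ha hb

lemma abs_triangleDefect_sub_le [CompleteSpace E] {a b : Ω → E} (ha : MemLp a 2 μ)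
    (hb : MemLp b 2 μ) {c l : ℝ} (hc : 0 < c) (hl : 0 < l) (hac : ∀ᵐ ω ∂μ, c ≤ ‖a ω‖)
    (hbc : ∀ᵐ ω ∂μ, c ≤ ‖b ω‖) (v w : E) :
    |triangleDefect μ a - triangleDefect μ b| ≤
      3 * l * ∫ ω, ‖(a ω - v) - (b ω - w)‖ ^ 2 ∂μ + (2 / l + 4 * l * (‖v - w‖ / c) ^ 2) *
        (∫ ω, ‖a ω - v‖ ^ 2 ∂μ + ∫ ω, ‖b ω - w‖ ^ 2 ∂μ) := by
  have hsub : meanSqDev μ (a - b) ≤ ∫ ω, ‖(a ω - v) - (b ω - w)‖ ^ 2 ∂μ := by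
    refine (meanSqDev_le_integral_norm_sub_sq (ha.sub hb) (v - w)).trans_eq ?_
    simp only [Pi.sub_apply, sub_sub_sub_comm]
  have hnorm := meanSqDev_norm_sub_norm_le ha hb hc hac hbc v w
  have hvar := abs_meanSqDev_sub_le ha hb hl
  have hvar_norm := abs_meanSqDev_sub_le ha.norm hb.norm hl
  have hQ : (meanSqDev μ a + meanSqDev μ b) / l ≤
      (∫ ω, ‖a ω - v‖ ^ 2 ∂μ + ∫ ω, ‖b ω - w‖ ^ 2 ∂μ) / l := by
    gcongr <;> exact meanSqDev_le_integral_norm_sub_sq ‹_› _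
  have hQ_norm : (meanSqDev μ (fun ω => ‖a ω‖) + meanSqDev μ (fun ω => ‖b ω‖)) / l ≤
      (∫ ω, ‖a ω - v‖ ^ 2 ∂μ + ∫ ω, ‖b ω - w‖ ^ 2 ∂μ) / l := by
    gcongr <;> exact meanSqDev_norm_le ‹_› _
  rw [triangleDefect_eq_meanSqDev_sub ha, triangleDefect_eq_meanSqDev_sub hb, sub_sub_sub_comm]
  refine (abs_sub _ _).trans ?_
  set k := ‖v - w‖ / c
  set S := ∫ ω, ‖(a ω - v) - (b ω - w)‖ ^ 2 ∂μ
  set Q := ∫ ω, ‖a ω - v‖ ^ 2 ∂μ + ∫ ω, ‖b ω - w‖ ^ 2 ∂μ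
  calc _ ≤ (l * S + Q / l) + (l * (2 * S + 4 * k ^ 2 * Q) + Q / l) :=
        add_le_add (hvar.trans (by gcongr)) (hvar_norm.trans (by gcongr))
    _ = 3 * l * S + (2 / l + 4 * l * k ^ 2) * Q := by ring

end MeanSqDev

section PowGap

variable {Ω : Type*} [MeasurableSpace Ω] {μ : Measure Ω}
variable {E : Type*} [NormedAddCommGroup E]

/-- The gap `‖∫ a‖^(-α) - (∫ ‖a‖)^(-α)`. For the velocity of a curve it is, up to a power of the
parameter length, the difference of negative powers of chord and arc length in the O'Hara
energy. -/
def powGap [NormedSpace ℝ E] (α : ℝ) (μ : Measure Ω) (a : Ω → E) : ℝ :=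
  1 / ‖∫ ω, a ω ∂μ‖ ^ α - 1 / (∫ ω, ‖a ω‖ ∂μ) ^ α

/-- A random vector whose norm lies in `[c, M]` and whose mean has norm at least `c`, so that
both bases in `powGap` stay away from `0`. -/
structure IsNondegenerate [NormedSpace ℝ E] (c M : ℝ) (μ : Measure Ω) (a : Ω → E) : Prop where
  aestronglyMeasurable : AEStronglyMeasurable a μ
  le_norm : ∀ᵐ ω ∂μ, c ≤ ‖a ω‖
  norm_le : ∀ᵐ ω ∂μ, ‖a ω‖ ≤ M
  le_norm_integral : c ≤ ‖∫ ω, a ω ∂μ‖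

variable {α c M : ℝ}

section NormedSpace

variable [NormedSpace ℝ E] {a b : Ω → E}

lemma IsNondegenerate.le_integral_norm (ha : IsNondegenerate c M μ a) : c ≤ ∫ ω, ‖a ω‖ ∂μ :=
  ha.le_norm_integral.trans (norm_integral_le_integral_norm a)

lemma IsNondegenerate.powGap_eq (hc : 0 < c) (ha : IsNondegenerate c M μ a) :
    powGap α μ a =
      (‖∫ ω, a ω ∂μ‖ ^ 2) ^ (-(α / 2)) - ((∫ ω, ‖a ω‖ ∂μ) ^ 2) ^ (-(α / 2)) := by
  have hrpow : ∀ {x : ℝ}, c ≤ x → 1 / x ^ α = (x ^ 2) ^ (-(α / 2)) := fun {x} hx => by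
    have hx0 : 0 ≤ x := hc.le.trans hx
    rw [← Real.rpow_natCast, ← Real.rpow_mul hx0, one_div, ← Real.rpow_neg hx0]
    congr 1
    push_cast
    ring
  rw [powGap, hrpow ha.le_norm_integral, hrpow ha.le_integral_norm]

lemma IsNondegenerate.abs_powGap_le_triangleDefect (hα : 0 ≤ α) (hc : 0 < c)
    (ha : IsNondegenerate c M μ a) :
    |powGap α μ a| ≤ α / 2 * (c ^ 2) ^ (-(α / 2) - 1) * triangleDefect μ a := by
  have hmono : ∀ {x : ℝ}, c ≤ x → c ^ 2 ≤ x ^ 2 := fun hx => pow_le_pow_left₀ hc.le hx 2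
  rw [ha.powGap_eq hc, ← abs_of_nonneg (triangleDefect_nonneg (μ := μ) a), triangleDefect,
    abs_sub_comm ((∫ ω, ‖a ω‖ ∂μ) ^ 2)]
  exact abs_rpow_neg_sub_le (pow_pos hc 2) (by positivity) (hmono ha.le_norm_integral)
    (hmono ha.le_integral_norm)

variable [IsProbabilityMeasure μ]

lemma abs_norm_integral_sub_norm_integral_le (ha : Integrable a μ) (hb : Integrable b μ) {N : ℝ}
    (hN : ∀ᵐ ω ∂μ, ‖a ω - b ω‖ ≤ N) : |‖∫ ω, a ω ∂μ‖ - ‖∫ ω, b ω ∂μ‖| ≤ N := by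
  refine (abs_norm_sub_norm_le _ _).trans ?_
  rw [← integral_sub ha hb]
  simpa using norm_integral_le_of_norm_le_const hN

lemma abs_integral_norm_sub_integral_norm_le {F : Type*} [NormedAddCommGroup F] {a b : Ω → F}
    (ha : Integrable a μ) (hb : Integrable b μ) {N : ℝ} (hN : ∀ᵐ ω ∂μ, ‖a ω - b ω‖ ≤ N) :
    |∫ ω, ‖a ω‖ ∂μ - ∫ ω, ‖b ω‖ ∂μ| ≤ N := by
  rw [← integral_sub ha.norm hb.norm, ← Real.norm_eq_abs]
  simpa using norm_integral_le_of_norm_le_const (μ := μ) (f := fun ω => ‖a ω‖ - ‖b ω‖)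
    (hN.mono fun ω h => (abs_norm_sub_norm_le _ _).trans h)

lemma IsNondegenerate.memLp (ha : IsNondegenerate c M μ a) : MemLp a 2 μ :=
  .of_bound ha.aestronglyMeasurable M ha.norm_le

lemma IsNondegenerate.integral_norm_le (ha : IsNondegenerate c M μ a) : ∫ ω, ‖a ω‖ ∂μ ≤ M := by
  simpa using integral_mono_ae (ha.memLp.integrable one_le_two).norm (integrable_const M)
    ha.norm_le

lemma IsNondegenerate.norm_integral_le (ha : IsNondegenerate c M μ a) : ‖∫ ω, a ω ∂μ‖ ≤ M :=
  (norm_integral_le_integral_norm a).trans ha.integral_norm_le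

lemma IsNondegenerate.abs_powGap_sub_le_triangleDefect (hα : 0 ≤ α) (hc : 0 < c)
    (ha : IsNondegenerate c M μ a) (hb : IsNondegenerate c M μ b) {N : ℝ}
    (hN : ∀ᵐ ω ∂μ, ‖a ω - b ω‖ ≤ N) :
    |powGap α μ a - powGap α μ b| ≤
      α / 2 * (c ^ 2) ^ (-(α / 2) - 1) * |triangleDefect μ a - triangleDefect μ b| +
        α / 2 * ((α / 2 + 1) * (c ^ 2) ^ (-(α / 2) - 2)) * (4 * M * N) * triangleDefect μ a := by
  have hmono : ∀ {x : ℝ}, c ≤ x → c ^ 2 ≤ x ^ 2 := fun hx => pow_le_pow_left₀ hc.le hx 2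
  have haI := ha.memLp.integrable one_le_two
  have hbI := hb.memLp.integrable one_le_two
  have hsq : ∀ {x y : ℝ}, c ≤ x → c ≤ y → x ≤ M → y ≤ M → |x - y| ≤ N →
      |x ^ 2 - y ^ 2| ≤ 2 * M * N := fun {x y} hx hy hxM hyM hxy => by
    rw [sq_sub_sq, abs_mul, abs_of_nonneg (by linarith : 0 ≤ x + y)]
    gcongr <;> linarith
  have hchord := hsq ha.le_norm_integral hb.le_norm_integral ha.norm_integral_le
    hb.norm_integral_le (abs_norm_integral_sub_norm_integral_le haI hbI hN)
  have harc := hsq ha.le_integral_norm hb.le_integral_norm ha.integral_norm_le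
    hb.integral_norm_le (abs_integral_norm_sub_integral_norm_le haI hbI hN)
  have hdefect : ∀ e : Ω → E,
      ‖∫ ω, e ω ∂μ‖ ^ 2 - (∫ ω, ‖e ω‖ ∂μ) ^ 2 = -triangleDefect μ e := fun _ => (neg_sub _ _).symm
  have h := abs_rpow_neg_sub_sub_le (pow_pos hc 2) (by positivity : 0 ≤ α / 2)
    (hmono ha.le_norm_integral) (hmono ha.le_integral_norm) (hmono hb.le_norm_integral)
    (hmono hb.le_integral_norm)
  rw [hdefect, hdefect, neg_sub_neg, abs_sub_comm (triangleDefect μ b), abs_neg,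
    abs_of_nonneg (triangleDefect_nonneg a)] at h
  rw [ha.powGap_eq hc, hb.powGap_eq hc]
  refine h.trans (add_le_add_right ?_ _)
  have := triangleDefect_nonneg (μ := μ) a
  gcongr
  linarith

end NormedSpace

variable [IsProbabilityMeasure μ] [InnerProductSpace ℝ E] [CompleteSpace E]

lemma exists_abs_powGap_le (hα : 0 ≤ α) (hc : 0 < c) :
    ∃ C : ℝ, 0 ≤ C ∧ ∀ {a : Ω → E} {M : ℝ}, IsNondegenerate c M μ a → ∀ v : E,
      |powGap α μ a| ≤ C * ∫ ω, ‖a ω - v‖ ^ 2 ∂μ :=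
  ⟨α / 2 * (c ^ 2) ^ (-(α / 2) - 1), by positivity, fun ha v =>
    (ha.abs_powGap_le_triangleDefect hα hc).trans
      (by gcongr; exact triangleDefect_le_integral_norm_sub_sq ha.memLp v)⟩

/- The free weight `l` encodes the Cauchy-Schwarz inequality: minimising over `l` bounds the
left-hand side by a multiple of `√(S * Q) + N * Q`, but the weighted form can be integrated
term by term. -/
lemma exists_abs_powGap_sub_le (hα : 0 ≤ α) (hc : 0 < c) (hM : 0 ≤ M) :
    ∃ C : ℝ, 0 ≤ C ∧ ∀ {a b : Ω → E}, IsNondegenerate c M μ a → IsNondegenerate c M μ b →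
      ∀ {N l : ℝ}, 0 < l → (∀ᵐ ω ∂μ, ‖a ω - b ω‖ ≤ N) → ∀ {v w : E}, ‖v - w‖ ≤ N →
      |powGap α μ a - powGap α μ b| ≤
        C * (l * (∫ ω, ‖(a ω - v) - (b ω - w)‖ ^ 2 ∂μ +
            N ^ 2 * (∫ ω, ‖a ω - v‖ ^ 2 ∂μ + ∫ ω, ‖b ω - w‖ ^ 2 ∂μ)) +
          (∫ ω, ‖a ω - v‖ ^ 2 ∂μ + ∫ ω, ‖b ω - w‖ ^ 2 ∂μ) / l) := by
  set C₁ := α / 2 * (c ^ 2) ^ (-(α / 2) - 1) with C₁_def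
  set C₂ := α / 2 * ((α / 2 + 1) * (c ^ 2) ^ (-(α / 2) - 2)) with C₂_def
  have hC₁ : 0 ≤ C₁ := by positivity
  have hC₂ : 0 ≤ C₂ := by positivity
  refine ⟨C₁ * (3 + 4 / c ^ 2) + C₂ * (4 * M),
    add_nonneg (mul_nonneg hC₁ (by positivity)) (mul_nonneg hC₂ (by positivity)),
    fun {a b} ha hb {N l} hl hN {v w} hvw => ?_⟩
  have hN0 : 0 ≤ N := (norm_nonneg _).trans hvw
  have hgap := ha.abs_powGap_sub_le_triangleDefect hα hc hb hN
  rw [← C₁_def, ← C₂_def] at hgap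
  have hdefect := abs_triangleDefect_sub_le ha.memLp hb.memLp hc hl ha.le_norm hb.le_norm v w
  have hdefect_le : triangleDefect μ a ≤ ∫ ω, ‖a ω - v‖ ^ 2 ∂μ + ∫ ω, ‖b ω - w‖ ^ 2 ∂μ :=
    (triangleDefect_le_integral_norm_sub_sq ha.memLp v).trans
      (le_add_of_nonneg_right (integral_nonneg fun _ => sq_nonneg _))
  set S := ∫ ω, ‖(a ω - v) - (b ω - w)‖ ^ 2 ∂μ
  set Q := ∫ ω, ‖a ω - v‖ ^ 2 ∂μ + ∫ ω, ‖b ω - w‖ ^ 2 ∂μ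
  have : 0 ≤ S := integral_nonneg fun _ => sq_nonneg _
  have : 0 ≤ Q := (triangleDefect_nonneg a).trans hdefect_le
  have hN_le := le_mul_sq_add_one_div hl N
  calc |powGap α μ a - powGap α μ b|
      ≤ C₁ * (3 * l * S + (2 / l + 4 * l * (‖v - w‖ / c) ^ 2) * Q) + C₂ * (4 * M * N) * Q :=
        hgap.trans (by gcongr)
    _ ≤ C₁ * (3 * l * S + (2 / l + 4 * l * (N / c) ^ 2) * Q) +
          C₂ * (4 * M * (l * N ^ 2 + 1 / l)) * Q := by gcongr
    _ = (C₁ * (3 + 4 / c ^ 2) + C₂ * (4 * M)) * (l * (S + N ^ 2 * Q) + Q / l) -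
          (C₁ * (4 / c ^ 2 + 1 + 3 * l ^ 2 * N ^ 2) * Q / l + C₁ * (4 / c ^ 2) * l * S +
            C₂ * (4 * M) * l * S) := by
        field_simp; ring
    _ ≤ _ := sub_le_self _ (by positivity)

end PowGap

section Gagliardo

lemma setLIntegral_Ioc_comp_add_of_periodic {H : ℝ → ℝ≥0∞} (hH : Function.Periodic H 1) (u : ℝ) :
    ∫⁻ r in Ioc (0 : ℝ) 1, H (u + r) = ∫⁻ r in Ioc (0 : ℝ) 1, H r := by
  have htranslate : ∫⁻ r in Ioc (0 : ℝ) 1, H (u + r) = ∫⁻ v in Ioc u (u + 1), H v := by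
    rw [← lintegral_indicator measurableSet_Ioc, ← lintegral_indicator measurableSet_Ioc,
      ← lintegral_add_left_eq_self (fun v => (Ioc u (u + 1)).indicator H v) u]
    simp only [indicator, mem_Ioc, lt_add_iff_pos_right, add_le_add_iff_left]
  have hperiod := (isAddFundamentalDomain_Ioc zero_lt_one u).setLIntegral_eq
    (isAddFundamentalDomain_Ioc zero_lt_one 0) H hH.map_vadd_zmultiples
  rw [htranslate, hperiod, zero_add]

instance isProbabilityMeasure_restrict_Ioc_zero_one :
    IsProbabilityMeasure ((volume : Measure ℝ).restrict (Ioc 0 1)) :=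
  ⟨by simp⟩

lemma memLp_restrict_Ioc_of_continuous {E : Type*} [NormedAddCommGroup E] {p : ℝ → E}
    (hp : Continuous p) (a b : ℝ) {r : ℝ≥0∞} : MemLp p r (volume.restrict (Ioc a b)) := by
  obtain ⟨C, hC⟩ := isCompact_Icc.exists_bound_of_continuousOn (s := Icc a b) hp.continuousOn
  exact MemLp.of_bound hp.aestronglyMeasurable C
    (ae_restrict_of_forall_mem measurableSet_Ioc fun t ht => hC t (Ioc_subset_Icc_self ht))

lemma setLIntegral_Ioc_ofReal_rpow {s b : ℝ} (hs : -1 < s) (hb : 0 ≤ b) :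
    ∫⁻ r in Ioc 0 b, ENNReal.ofReal (r ^ s) = ENNReal.ofReal (b ^ (s + 1) / (s + 1)) := by
  have hint : IntegrableOn (fun r : ℝ => r ^ s) (Ioc 0 b) :=
    (intervalIntegrable_iff_integrableOn_Ioc_of_le hb).1
      (intervalIntegral.intervalIntegrable_rpow' hs)
  rw [← ofReal_integral_eq_lintegral_ofReal hint, ← intervalIntegral.integral_of_le hb,
    integral_rpow (Or.inl hs), Real.zero_rpow (by linarith), sub_zero]
  exact (ae_restrict_mem measurableSet_Ioc).mono fun r hr => Real.rpow_nonneg hr.1.le _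

section Seminorm

variable {E : Type*} [NormedAddCommGroup E]

/-- The integrand `|p(u+w) - p(u)|² / |w|^α` of the Gagliardo seminorm at `z = (u, w)`, in the
parametrization `α = 1 + 2σ` of the order `σ`. -/
def gagliardoIntegrand (α : ℝ) (p : ℝ → E) (z : ℝ × ℝ) : ℝ≥0∞ :=
  ENNReal.ofReal (‖p (z.1 + z.2) - p z.1‖ ^ 2 / |z.2| ^ α)

/-- The squared Gagliardo seminorm of `p`, localized to increments of size less than `ε`: the
quantity that is at most about `δ²` on `X_δ`. -/
def gagliardoNear (α ε : ℝ) (p : ℝ → E) : ℝ≥0∞ :=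
  ∫⁻ u in Ioc (0 : ℝ) 1, ∫⁻ w in Ioo (-ε) ε, gagliardoIntegrand α p (u, w)

variable {α ε : ℝ} {p q : ℝ → E}

lemma measurable_gagliardoIntegrand (α : ℝ) (hp : Continuous p) :
    Measurable (gagliardoIntegrand α p) := by
  have : Measurable fun z : ℝ × ℝ => ‖p (z.1 + z.2) - p z.1‖ := Continuous.measurable (by fun_prop)
  unfold gagliardoIntegrand
  fun_prop

lemma gagliardoSq_eq_gagliardoNear (α : ℝ) (p : ℝ → E) :
    gagliardoSq ((α - 1) / 2) p = gagliardoNear α (1 / 2) p := by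
  simp only [gagliardoSq, gagliardoNear, gagliardoIntegrand,
    show 1 + 2 * ((α - 1) / 2) = α by ring, show -(1 : ℝ) / 2 = -(1 / 2) by ring]

lemma gagliardoNear_mono {ε' : ℝ} (h : ε ≤ ε') (p : ℝ → E) :
    gagliardoNear α ε p ≤ gagliardoNear α ε' p :=
  lintegral_mono fun _ => lintegral_mono_set (Ioo_subset_Ioo (neg_le_neg h) h)

lemma gagliardoNear_eq_setLIntegral_prod (α ε : ℝ) (hp : Continuous p) :
    gagliardoNear α ε p = ∫⁻ z in Ioc (0 : ℝ) 1 ×ˢ Ioo (-ε) ε, gagliardoIntegrand α p z := by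
  rw [Measure.volume_eq_prod,
    setLIntegral_prod _ (measurable_gagliardoIntegrand α hp).aemeasurable, gagliardoNear]

lemma norm_sub_sq_le_two_mul_add (x y : E) : ‖x - y‖ ^ 2 ≤ 2 * ‖x‖ ^ 2 + 2 * ‖y‖ ^ 2 := by
  rw [← mul_add]
  exact (pow_le_pow_left₀ (norm_nonneg _) (norm_sub_le x y) 2).trans add_sq_le

lemma gagliardoIntegrand_sub_le (α : ℝ) (p q : ℝ → E) (z : ℝ × ℝ) :
    gagliardoIntegrand α (p - q) z ≤
      2 * gagliardoIntegrand α p z + 2 * gagliardoIntegrand α q z := by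
  rw [← ENNReal.ofReal_ofNat 2]
  simp only [gagliardoIntegrand]
  rw [← ENNReal.ofReal_mul zero_le_two, ← ENNReal.ofReal_mul zero_le_two,
    ← ENNReal.ofReal_add (by positivity) (by positivity), mul_div_assoc', mul_div_assoc',
    ← add_div, Pi.sub_apply, Pi.sub_apply, sub_sub_sub_comm]
  gcongr
  exact norm_sub_sq_le_two_mul_add _ _

lemma gagliardoNear_sub_le (hp : Continuous p) (hq : Continuous q) :
    gagliardoNear α ε (p - q) ≤ 2 * gagliardoNear α ε p + 2 * gagliardoNear α ε q := by
  rw [gagliardoNear_eq_setLIntegral_prod α ε (hp.sub hq),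
    gagliardoNear_eq_setLIntegral_prod α ε hp, gagliardoNear_eq_setLIntegral_prod α ε hq,
    ← lintegral_const_mul' _ _ ENNReal.ofNat_ne_top,
    ← lintegral_const_mul' _ _ ENNReal.ofNat_ne_top,
    ← lintegral_add_left ((measurable_gagliardoIntegrand α hp).const_mul 2)]
  exact lintegral_mono (gagliardoIntegrand_sub_le α p q)

end Seminorm

section SobolevEmbedding

variable {E : Type*} [NormedAddCommGroup E]

lemma setLIntegral_Ioc_sub_sq_div_le {α : ℝ} {p : ℝ → E} {r b : ℝ} (hr : r ≤ b) (u : ℝ) :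
    ∫⁻ t in Ioc 0 r, ENNReal.ofReal (‖p (u + t) - p (u + r)‖ ^ 2 / |t - r| ^ α) ≤
      ∫⁻ w in Ioo (-b) b, gagliardoIntegrand α p (u + r, w) := by
  rw [← lintegral_indicator measurableSet_Ioc, ← lintegral_indicator measurableSet_Ioo,
    ← lintegral_add_left_eq_self _ r]
  refine lintegral_mono fun w => ?_
  by_cases hw : r + w ∈ Ioc 0 r
  · have hw' : w ∈ Ioo (-b) b := by constructor <;> linarith [hw.1, hw.2]
    rw [indicator_of_mem hw, indicator_of_mem hw', add_sub_cancel_left, gagliardoIntegrand,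
      add_assoc]
  · rw [indicator_of_notMem hw]
    exact zero_le

lemma lintegral_lintegral_sub_sq_div_le {α : ℝ} {p : ℝ → E} (hper : Function.Periodic p 1) {b : ℝ}
    (hb : b ≤ 1) (u : ℝ) :
    ∫⁻ r in Ioc 0 b, ∫⁻ t in Ioc 0 r, ENNReal.ofReal (‖p (u + t) - p (u + r)‖ ^ 2 / |t - r| ^ α) ≤
      gagliardoNear α b p := by
  have hH : Function.Periodic (fun v => ∫⁻ w in Ioo (-b) b, gagliardoIntegrand α p (v, w)) 1 :=
    fun v => by simp only [gagliardoIntegrand, add_right_comm v 1, hper _]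
  calc _ ≤ ∫⁻ r in Ioc 0 b, ∫⁻ w in Ioo (-b) b, gagliardoIntegrand α p (u + r, w) :=
        setLIntegral_mono' measurableSet_Ioc fun r hr => setLIntegral_Ioc_sub_sq_div_le hr.2 u
    _ ≤ ∫⁻ r in Ioc (0 : ℝ) 1, ∫⁻ w in Ioo (-b) b, gagliardoIntegrand α p (u + r, w) :=
        lintegral_mono_set (Ioc_subset_Ioc_right hb)
    _ = gagliardoNear α b p := setLIntegral_Ioc_comp_add_of_periodic hH u

lemma div_sq_le_add_rpow {X r d α N : ℝ} (hr : 0 < r) (hd : 0 < d) (hdr : d ≤ r) (hα : 0 ≤ α)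
    (hN : 0 < N) : X / r ^ 2 ≤ N⁻¹ * (X ^ 2 / d ^ α) + N * r ^ (α - 4) := by
  have : 0 < d ^ α := Real.rpow_pos_of_pos hd _
  have hrpow : r ^ (α - 4) = r ^ α / (r ^ 2) ^ 2 := by
    rw [Real.rpow_sub hr, ← pow_mul]; norm_cast
  have hyoung : X / r ^ 2 ≤ N⁻¹ * (X ^ 2 / d ^ α) + N * (d ^ α / (r ^ 2) ^ 2) := by
    have hsq : N⁻¹ * (X ^ 2 / d ^ α) + N * (d ^ α / (r ^ 2) ^ 2) - X / r ^ 2 =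
        ((X * r ^ 2 - N * d ^ α / 2) ^ 2 + 3 / 4 * (N * d ^ α) ^ 2) /
          (N * d ^ α * (r ^ 2) ^ 2) := by
      field_simp
      ring
    exact sub_nonneg.1 (hsq ▸ by positivity)
  rw [hrpow]
  exact hyoung.trans (by gcongr)

lemma setLIntegral_Ioc_norm_sub_div_sq_le {α : ℝ} (hα : 0 ≤ α) (q : ℝ → E) {r N : ℝ} (hr : 0 < r)
    (hN : 0 < N) :
    ∫⁻ t in Ioc 0 r, ENNReal.ofReal (‖q t - q r‖ / r ^ 2) ≤
      ENNReal.ofReal N⁻¹ * (∫⁻ t in Ioc 0 r, ENNReal.ofReal (‖q t - q r‖ ^ 2 / |t - r| ^ α)) +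
        ENNReal.ofReal N * ENNReal.ofReal (r ^ (α - 3)) := by
  have hconst : ∫⁻ _ in Ioc 0 r, ENNReal.ofReal (N * r ^ (α - 4)) =
      ENNReal.ofReal N * ENNReal.ofReal (r ^ (α - 3)) := by
    rw [setLIntegral_const, Real.volume_Ioc, sub_zero, ← ENNReal.ofReal_mul (by positivity),
      ← ENNReal.ofReal_mul hN.le, mul_assoc, ← Real.rpow_add_one hr.ne']
    norm_num [sub_add]
  rw [← hconst, ← lintegral_const_mul' _ _ ENNReal.ofReal_ne_top,
    ← lintegral_add_right _ measurable_const]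
  refine setLIntegral_mono' measurableSet_Ioc fun t ht => ?_
  rw [← ENNReal.ofReal_mul (by positivity), ← ENNReal.ofReal_add (by positivity) (by positivity)]
  refine ENNReal.ofReal_le_ofReal ?_
  rcases ht.2.eq_or_lt with rfl | htr
  · simp only [sub_self, norm_zero, zero_div, ne_eq, OfNat.ofNat_ne_zero, not_false_eq_true,
      zero_pow, mul_zero, zero_add]
    positivity
  · have hdist : |t - r| = r - t := by rw [abs_sub_comm, abs_of_pos (sub_pos.2 htr)]
    rw [hdist]
    exact div_sq_le_add_rpow hr (sub_pos.2 htr) (by linarith [ht.1]) hα hN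

variable [NormedSpace ℝ E]

lemma norm_interval_average_le {p : ℝ → E} (hp : Continuous p) (hper : Function.Periodic p 1)
    {b : ℝ} (hb : b ∈ Ioc (0 : ℝ) 1) (u : ℝ) :
    ‖⨍ t in (0 : ℝ)..b, p (u + t)‖ ≤ b⁻¹ * ∫ t in (0 : ℝ)..1, ‖p t‖ := by
  have hperNorm : Function.Periodic (fun t => ‖p t‖) 1 := fun t => by simp only [hper t]
  rw [interval_average_eq, sub_zero, norm_smul, norm_inv, Real.norm_of_nonneg hb.1.le]
  refine mul_le_mul_of_nonneg_left ?_ (inv_nonneg.2 hb.1.le)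
  calc ‖∫ t in (0 : ℝ)..b, p (u + t)‖ ≤ ∫ t in (0 : ℝ)..b, ‖p (u + t)‖ :=
        intervalIntegral.norm_integral_le_integral_norm hb.1.le
    _ ≤ ∫ t in (0 : ℝ)..1, ‖p (u + t)‖ :=
        intervalIntegral.integral_mono_interval le_rfl hb.1.le hb.2
          (Eventually.of_forall fun _ => norm_nonneg _)
          (Continuous.intervalIntegrable (by fun_prop) _ _)
    _ = ∫ t in (0 : ℝ)..1, ‖p t‖ := by
        rw [intervalIntegral.integral_comp_add_left (fun t => ‖p t‖), add_zero,
          hperNorm.intervalIntegral_add_eq u 0, zero_add]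

variable [CompleteSpace E]

lemma hasDerivAt_interval_average {q : ℝ → E} (hq : Continuous q) {r : ℝ} (hr : r ≠ 0) :
    HasDerivAt (fun r => ⨍ t in (0 : ℝ)..r, q t)
      (∫ t in (0 : ℝ)..r, (-(r ^ 2)⁻¹) • (q t - q r)) r := by
  have hint : ∀ a b, IntervalIntegrable q volume a b := fun a b => hq.intervalIntegrable a b
  have hderiv := (hasDerivAt_inv hr).smul (intervalIntegral.integral_hasDerivAt_right (hint 0 r)
    hq.aestronglyMeasurable.stronglyMeasurableAtFilter hq.continuousAt)
  simp only [interval_average_eq, sub_zero]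
  convert! hderiv using 1
  rw [intervalIntegral.integral_smul, intervalIntegral.integral_sub (hint 0 r) (by simp),
    intervalIntegral.integral_const, smul_sub, smul_smul, sub_eq_neg_add, ← neg_smul, sub_zero]
  congr 2
  field_simp

lemma tendsto_interval_average_nhdsGT {q : ℝ → E} (hq : Continuous q) :
    Tendsto (fun r => ⨍ t in (0 : ℝ)..r, q t) (𝓝[>] 0) (𝓝 (q 0)) := by
  have hderiv : HasDerivAt (fun r => ∫ t in (0 : ℝ)..r, q t) (q 0) 0 :=
    intervalIntegral.integral_hasDerivAt_right (hq.intervalIntegrable _ _)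
      hq.aestronglyMeasurable.stronglyMeasurableAtFilter hq.continuousAt
  refine (hderiv.tendsto_slope.mono_left (nhdsGT_le_nhdsNE 0)).congr fun r => ?_
  rw [slope_def_module, intervalIntegral.integral_same, interval_average_eq, sub_zero, sub_zero]

lemma enorm_interval_average_sub_le {q : ℝ → E} (hq : Continuous q) {b : ℝ} (hb : 0 < b) :
    ‖(⨍ t in (0 : ℝ)..b, q t) - q 0‖ₑ ≤
      ∫⁻ r in Ioc 0 b, ∫⁻ t in Ioc 0 r, ENNReal.ofReal (‖q t - q r‖ / r ^ 2) := by
  refine le_of_tendsto ((tendsto_const_nhds.sub (tendsto_interval_average_nhdsGT hq)).enorm) ?_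
  filter_upwards [Ioo_mem_nhdsGT hb] with ε hε
  have hpos : ∀ r ∈ uIcc ε b, 0 < r := fun r hr => by
    rw [uIcc_of_le hε.2.le] at hr
    exact hε.1.trans_le hr.1
  have hcont : ContinuousOn (fun r => ∫ t in (0 : ℝ)..r, (-(r ^ 2)⁻¹) • (q t - q r))
      (uIcc ε b) := by
    have hinv : ContinuousOn (fun r : ℝ => (r ^ 2)⁻¹) (uIcc ε b) :=
      ContinuousOn.inv₀ (by fun_prop) fun r hr => (pow_pos (hpos r hr) 2).ne'
    simp only [intervalIntegral.integral_smul]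
    exact hinv.neg.smul (intervalIntegral.continuous_parametric_intervalIntegral_of_continuous
      (by fun_prop) continuous_id).continuousOn
  rw [← intervalIntegral.integral_eq_sub_of_hasDerivAt
    (fun r hr => hasDerivAt_interval_average hq (hpos r hr).ne') hcont.intervalIntegrable,
    intervalIntegral.integral_of_le hε.2.le]
  refine (enorm_integral_le_lintegral_enorm _).trans ((setLIntegral_mono' measurableSet_Ioc
    fun r hr => ?_).trans (lintegral_mono_set (Ioc_subset_Ioc_left hε.1.le)))
  rw [intervalIntegral.integral_of_le (hε.1.trans hr.1).le]
  refine (enorm_integral_le_lintegral_enorm _).trans_eq (lintegral_congr fun t => ?_)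
  rw [← ofReal_norm, norm_smul, norm_neg, norm_inv, Real.norm_of_nonneg (by positivity),
    inv_mul_eq_div]

lemma norm_interval_average_sub_le {α : ℝ} (hα : 2 < α) {p : ℝ → E} (hp : Continuous p)
    (hper : Function.Periodic p 1) {b : ℝ} (hb : b ∈ Ioc (0 : ℝ) 1) {N : ℝ} (hN : 0 < N)
    (hG : gagliardoNear α b p ≤ ENNReal.ofReal (N ^ 2)) (u : ℝ) :
    ‖(⨍ t in (0 : ℝ)..b, p (u + t)) - p u‖ ≤ (1 + 1 / (α - 2)) * N := by
  have hα' : 0 < α - 2 := sub_pos.2 hα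
  have henorm : ‖(⨍ t in (0 : ℝ)..b, p (u + t)) - p u‖ₑ ≤
      ENNReal.ofReal ((1 + 1 / (α - 2)) * N) := by
    calc _ ≤ ∫⁻ r in Ioc 0 b, ∫⁻ t in Ioc 0 r,
          ENNReal.ofReal (‖p (u + t) - p (u + r)‖ / r ^ 2) := by
          simpa only [add_zero] using
            enorm_interval_average_sub_le (q := fun t => p (u + t)) (by fun_prop) hb.1
      _ ≤ ∫⁻ r in Ioc 0 b, (ENNReal.ofReal N⁻¹ * (∫⁻ t in Ioc 0 r,
            ENNReal.ofReal (‖p (u + t) - p (u + r)‖ ^ 2 / |t - r| ^ α)) +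
          ENNReal.ofReal N * ENNReal.ofReal (r ^ (α - 3))) :=
          setLIntegral_mono' measurableSet_Ioc fun r hr =>
            setLIntegral_Ioc_norm_sub_div_sq_le (by linarith) (fun t => p (u + t)) hr.1 hN
      _ ≤ ENNReal.ofReal N⁻¹ * ENNReal.ofReal (N ^ 2) +
          ENNReal.ofReal N * ENNReal.ofReal (1 / (α - 2)) := by
          rw [lintegral_add_right _ (by fun_prop), lintegral_const_mul' _ _ ENNReal.ofReal_ne_top,
            lintegral_const_mul' _ _ ENNReal.ofReal_ne_top,
            setLIntegral_Ioc_ofReal_rpow (by linarith) hb.1.le,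
            show α - 3 + 1 = α - 2 by ring]
          gcongr
          · exact (lintegral_lintegral_sub_sq_div_le hper hb.2 u).trans hG
          · exact Real.rpow_le_one hb.1.le hb.2 hα'.le
      _ = ENNReal.ofReal ((1 + 1 / (α - 2)) * N) := by
          rw [← ENNReal.ofReal_mul (by positivity), ← ENNReal.ofReal_mul hN.le,
            ← ENNReal.ofReal_add (by positivity) (by positivity)]
          congr 1
          field_simp
  rw [← ofReal_norm] at henorm
  exact (ENNReal.ofReal_le_ofReal_iff (by positivity)).1 henorm

lemma norm_le_of_gagliardoNear_le {α : ℝ} (hα : 2 < α) {p : ℝ → E} (hp : Continuous p)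
    (hper : Function.Periodic p 1) {N : ℝ} (hN : 0 < N)
    (hG : gagliardoNear α (1 / 2) p ≤ ENNReal.ofReal (N ^ 2))
    (hL : ∫ t in Ioc (0 : ℝ) 1, ‖p t‖ ^ 2 ≤ N ^ 2) (u : ℝ) :
    ‖p u‖ ≤ (3 + 1 / (α - 2)) * N := by
  have hhalf : (1 / 2 : ℝ) ∈ Ioc (0 : ℝ) 1 := by norm_num
  have hosc := norm_interval_average_sub_le hα hp hper hhalf hN hG u
  have hmean := norm_interval_average_le hp hper hhalf u
  have hmass : ∫ t in (0 : ℝ)..1, ‖p t‖ ≤ N := by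
    rw [intervalIntegral.integral_of_le zero_le_one]
    exact (abs_le_of_sq_le_sq' ((sq_integral_norm_le_integral_norm_sq
      (memLp_restrict_Ioc_of_continuous hp 0 1)).trans hL) hN.le).2
  have htriangle := norm_sub_norm_le (p u) (⨍ t in (0 : ℝ)..(1 / 2), p (u + t))
  rw [norm_sub_rev] at htriangle
  linarith

end SobolevEmbedding

end Gagliardo

section Oscillation

variable {E : Type*} [NormedAddCommGroup E]

/-- The mean square oscillation `∫₀¹ |p(u+sw) - p(u)|² ds` of `p` on the segment `[u, u+w]`. It
bounds the O'Hara integrand of a curve with velocity `p` up to the factor `|w|^(-α)`. -/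
def oscSq (p : ℝ → E) (u w : ℝ) : ℝ := ∫ s in Ioc (0 : ℝ) 1, ‖p (u + s * w) - p u‖ ^ 2

lemma oscSq_nonneg (p : ℝ → E) (u w : ℝ) : 0 ≤ oscSq p u w :=
  integral_nonneg fun _ => sq_nonneg _

variable {p : ℝ → E}

lemma continuous_oscSq (hp : Continuous p) : Continuous fun z : ℝ × ℝ => oscSq p z.1 z.2 := by
  simp only [oscSq, ← intervalIntegral.integral_of_le (zero_le_one' ℝ)]
  exact intervalIntegral.continuous_parametric_intervalIntegral_of_continuous' (by fun_prop) 0 1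

lemma setLIntegral_Ioo_comp_mul_left_le {F : ℝ → ℝ≥0∞} (hF : Measurable F) {s : ℝ}
    (hs : s ∈ Ioc (0 : ℝ) 1) (ε : ℝ) :
    ENNReal.ofReal s * ∫⁻ w in Ioo (-ε) ε, F (s * w) ≤ ∫⁻ w in Ioo (-ε) ε, F w := by
  have hscale : ∫⁻ w, (Ioo (-ε) ε).indicator F (s * w) =
      ENNReal.ofReal s⁻¹ * ∫⁻ w in Ioo (-ε) ε, F w := by
    rw [← lintegral_map (hF.indicator measurableSet_Ioo) (measurable_const_mul s),
      Real.map_volume_mul_left hs.1.ne', lintegral_smul_measure, abs_of_pos (inv_pos.2 hs.1),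
      smul_eq_mul, lintegral_indicator measurableSet_Ioo]
  have hle : ∫⁻ w in Ioo (-ε) ε, F (s * w) ≤ ∫⁻ w, (Ioo (-ε) ε).indicator F (s * w) := by
    rw [← lintegral_indicator measurableSet_Ioo]
    refine lintegral_mono (indicator_le fun w hw => ?_)
    have hsw : s * w ∈ Ioo (-ε) ε := by
      rw [mem_Ioo, ← abs_lt, abs_mul, abs_of_pos hs.1]
      exact (mul_le_of_le_one_left (abs_nonneg _) hs.2).trans_lt (abs_lt.2 hw)
    rw [indicator_of_mem hsw]
  calc _ ≤ ENNReal.ofReal s * (ENNReal.ofReal s⁻¹ * ∫⁻ w in Ioo (-ε) ε, F w) := by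
        rw [← hscale]
        gcongr
    _ = ∫⁻ w in Ioo (-ε) ε, F w := by
        rw [← mul_assoc, ← ENNReal.ofReal_mul hs.1.le, mul_inv_cancel₀ hs.1.ne',
          ENNReal.ofReal_one, one_mul]

variable {α ε : ℝ}

lemma ofReal_oscSq_div (α : ℝ) (hp : Continuous p) (u w : ℝ) :
    ENNReal.ofReal (oscSq p u w / |w| ^ α) =
      ∫⁻ s in Ioc (0 : ℝ) 1, ENNReal.ofReal (s ^ α) * gagliardoIntegrand α p (u, s * w) := by
  have hint : Integrable (fun s => ‖p (u + s * w) - p u‖ ^ 2 / |w| ^ α)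
      (volume.restrict (Ioc (0 : ℝ) 1)) :=
    (memLp_restrict_Ioc_of_continuous (p := fun s => p (u + s * w) - p u) (by fun_prop) 0 1
      |>.integrable_norm_pow two_ne_zero).div_const _
  rw [oscSq, ← integral_div, ofReal_integral_eq_lintegral_ofReal hint
    (Eventually.of_forall fun s => by positivity)]
  refine setLIntegral_congr_fun measurableSet_Ioc fun s hs => ?_
  have hsa : 0 < s ^ α := Real.rpow_pos_of_pos hs.1 _
  rw [gagliardoIntegrand, ← ENNReal.ofReal_mul hsa.le, abs_mul, abs_of_pos hs.1,
    Real.mul_rpow hs.1.le (abs_nonneg _), mul_div_assoc', mul_div_mul_left _ _ hsa.ne']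

lemma lintegral_oscSq_div_le (hα : 1 ≤ α) (hp : Continuous p) :
    ∫⁻ z in Ioc (0 : ℝ) 1 ×ˢ Ioo (-ε) ε, ENNReal.ofReal (oscSq p z.1 z.2 / |z.2| ^ α) ≤
      gagliardoNear α ε p := by
  have hG := measurable_gagliardoIntegrand α hp
  have hmeas : Measurable fun x : (ℝ × ℝ) × ℝ =>
      ENNReal.ofReal (x.2 ^ α) * gagliardoIntegrand α p (x.1.1, x.2 * x.1.2) := by fun_prop
  have hdilate : ∀ s ∈ Ioc (0 : ℝ) 1, ∫⁻ z in Ioc (0 : ℝ) 1 ×ˢ Ioo (-ε) ε,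
      ENNReal.ofReal (s ^ α) * gagliardoIntegrand α p (z.1, s * z.2) ≤ gagliardoNear α ε p := by
    intro s hs
    rw [Measure.volume_eq_prod, setLIntegral_prod _ (by fun_prop)]
    refine lintegral_mono fun u => ?_
    rw [lintegral_const_mul' _ _ ENNReal.ofReal_ne_top]
    refine le_trans ?_ (setLIntegral_Ioo_comp_mul_left_le (hG.comp measurable_prodMk_left) hs ε)
    simp only [Function.comp_apply]
    gcongr
    simpa only [Real.rpow_one] using Real.rpow_le_rpow_of_exponent_ge hs.1 hs.2 hα
  simp only [ofReal_oscSq_div α hp]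
  rw [lintegral_lintegral_swap hmeas.aemeasurable]
  calc _ ≤ ∫⁻ _ in Ioc (0 : ℝ) 1, gagliardoNear α ε p :=
        setLIntegral_mono' measurableSet_Ioc hdilate
    _ = gagliardoNear α ε p := by simp

lemma lintegral_mul_oscSq_add_div_le (hα : 1 ≤ α) {q r : ℝ → E} (hp : Continuous p)
    (hq : Continuous q) (hr : Continuous r) {A B : ℝ} (hA : 0 ≤ A) (hB : 0 ≤ B) :
    ∫⁻ z in Ioc (0 : ℝ) 1 ×ˢ Ioo (-ε) ε, ENNReal.ofReal
      ((A * oscSq p z.1 z.2 + B * (oscSq q z.1 z.2 + oscSq r z.1 z.2)) / |z.2| ^ α) ≤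
      ENNReal.ofReal A * gagliardoNear α ε p +
        ENNReal.ofReal B * (gagliardoNear α ε q + gagliardoNear α ε r) := by
  have hmeas : ∀ {q : ℝ → E}, Continuous q →
      Measurable fun z : ℝ × ℝ => ENNReal.ofReal (oscSq q z.1 z.2 / |z.2| ^ α) := fun hq => by
    have := (continuous_oscSq hq).measurable
    fun_prop
  have hsplit : ∀ z : ℝ × ℝ, ENNReal.ofReal
      ((A * oscSq p z.1 z.2 + B * (oscSq q z.1 z.2 + oscSq r z.1 z.2)) / |z.2| ^ α) =
      ENNReal.ofReal A * ENNReal.ofReal (oscSq p z.1 z.2 / |z.2| ^ α) + ENNReal.ofReal B *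
        (ENNReal.ofReal (oscSq q z.1 z.2 / |z.2| ^ α) +
          ENNReal.ofReal (oscSq r z.1 z.2 / |z.2| ^ α)) := fun z => by
    have := oscSq_nonneg p z.1 z.2
    have := oscSq_nonneg q z.1 z.2
    have := oscSq_nonneg r z.1 z.2
    rw [← ENNReal.ofReal_add (by positivity) (by positivity), ← ENNReal.ofReal_mul hA,
      ← ENNReal.ofReal_mul hB, ← ENNReal.ofReal_add (by positivity) (by positivity)]
    congr 1
    ring
  simp only [hsplit]
  rw [lintegral_add_left ((hmeas hp).const_mul _), lintegral_const_mul' _ _ ENNReal.ofReal_ne_top,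
    lintegral_const_mul' _ _ ENNReal.ofReal_ne_top, lintegral_add_left (hmeas hq)]
  gcongr <;> exact lintegral_oscSq_div_le hα ‹_›

end Oscillation

section MeanVelocity

variable {E : Type*} [NormedAddCommGroup E] [NormedSpace ℝ E]

/-- The mean velocity `∫₀¹ f'(u+sw) ds` on the segment `[u, u+w]`: the difference quotient
`(f(u+w) - f(u)) / w`, extended by `f'(u)` to `w = 0`. -/
def meanVelocity (f : ℝ → E) (u w : ℝ) : E := ∫ s in Ioc (0 : ℝ) 1, deriv f (u + s * w)

variable {f g : ℝ → E}

lemma continuous_meanVelocity (hf : Continuous (deriv f)) :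
    Continuous fun z : ℝ × ℝ => meanVelocity f z.1 z.2 := by
  simp only [meanVelocity, ← intervalIntegral.integral_of_le (zero_le_one' ℝ)]
  exact intervalIntegral.continuous_parametric_intervalIntegral_of_continuous' (by fun_prop) 0 1

lemma periodic_deriv (hf : Function.Periodic f 1) : Function.Periodic (deriv f) 1 := fun u => by
  rw [← deriv_comp_add_const, hf.funext]

lemma periodic_meanVelocity (hf : Function.Periodic f 1) (w : ℝ) :
    Function.Periodic (fun u => meanVelocity f u w) 1 := fun u => by
  simp only [meanVelocity, add_right_comm u 1, periodic_deriv hf _]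

lemma norm_meanVelocity_sub_le {c : ℝ} (hf : Continuous (deriv f)) (hg : Continuous (deriv g))
    (h : ∀ u, ‖deriv f u - deriv g u‖ ≤ c) (u w : ℝ) :
    ‖meanVelocity f u w - meanVelocity g u w‖ ≤ c := by
  have hint : ∀ {f : ℝ → E}, Continuous (deriv f) →
      Integrable (fun s => deriv f (u + s * w)) (volume.restrict (Ioc (0 : ℝ) 1)) := fun hf =>
    (Continuous.intervalIntegrable (by fun_prop) 0 1).1
  rw [meanVelocity, meanVelocity, ← integral_sub (hint hf) (hint hg)]
  simpa using norm_setIntegral_le_of_norm_le_const (μ := volume) (s := Ioc (0 : ℝ) 1)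
    measure_Ioc_lt_top fun s _ => h (u + s * w)

variable [CompleteSpace E]

@[simp] lemma meanVelocity_zero_right (f : ℝ → E) (u : ℝ) : meanVelocity f u 0 = deriv f u := by
  simp [meanVelocity]

lemma sub_eq_smul_meanVelocity (hf : ContDiff ℝ 1 f) (u w : ℝ) :
    f (u + w) - f u = w • meanVelocity f u w := by
  have h := intervalIntegral.smul_integral_comp_add_mul (a := 0) (b := 1) (deriv f) w u
  rw [mul_zero, mul_one, add_zero, intervalIntegral.integral_deriv_eq_sub
    (fun x _ => (hf.differentiable one_ne_zero).differentiableAt)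
    ((hf.continuous_deriv le_rfl).intervalIntegrable _ _)] at h
  rw [← h, meanVelocity, intervalIntegral.integral_of_le zero_le_one]
  simp only [mul_comm w]

end MeanVelocity

section BiLipschitz

/-- The 1-periodic `C¹` curves with speed at most `M` and all mean velocities on segments of length
at most `1/2` at least `c`. Since every arc of `ℝ/ℤ` or its complement is such a segment, for
`0 < c` this is a quantitative form of being injective and regular. -/
structure BiLipschitzCurve (c M : ℝ) (f : ℝ → Rn n) : Prop where
  contDiff : ContDiff ℝ 1 f
  periodic : Function.Periodic f 1
  le_norm_meanVelocity : ∀ u w, |w| ≤ 1 / 2 → c ≤ ‖meanVelocity f u w‖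
  norm_deriv_le : ∀ u, ‖deriv f u‖ ≤ M

namespace BiLipschitzCurve

variable {c M : ℝ} {f : ℝ → Rn n}

lemma continuous_deriv (hf : BiLipschitzCurve c M f) : Continuous (deriv f) :=
  hf.contDiff.continuous_deriv le_rfl

lemma le_norm_deriv (hf : BiLipschitzCurve c M f) (u : ℝ) : c ≤ ‖deriv f u‖ := by
  simpa using hf.le_norm_meanVelocity u 0 (by simp)

lemma le (hf : BiLipschitzCurve c M f) : c ≤ M :=
  (hf.le_norm_deriv 0).trans (hf.norm_deriv_le 0)

lemma mul_abs_le_norm_sub (hf : BiLipschitzCurve c M f) {w : ℝ} (hw : |w| ≤ 1 / 2) (u : ℝ) :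
    c * |w| ≤ ‖f (u + w) - f u‖ := by
  rw [sub_eq_smul_meanVelocity hf.contDiff, norm_smul, Real.norm_eq_abs, mul_comm]
  gcongr
  exact hf.le_norm_meanVelocity u w hw

lemma regularCurve (hf : BiLipschitzCurve c M f) (hc : 0 < c) : RegularCurve f := fun u =>
  norm_pos_iff.1 (hc.trans_le (hf.le_norm_deriv u))

lemma perInjective (hf : BiLipschitzCurve c M f) (hc : 0 < c) : PerInjective f := by
  intro u v huv
  refine ⟨round (v - u), ?_⟩
  set w := v - u - round (v - u) with hw
  have huw : f (u + w) = f u := by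
    rw [huv, show u + w = v - (round (v - u) : ℝ) * 1 by rw [hw]; ring,
      hf.periodic.sub_int_mul_eq]
  have hle := hf.mul_abs_le_norm_sub (abs_sub_round _ : |w| ≤ 1 / 2) u
  rw [huw, sub_self, norm_zero] at hle
  have : w = 0 := abs_nonpos_iff.1 (nonpos_of_mul_nonpos_right hle hc)
  linarith

end BiLipschitzCurve

lemma meanVelocity_ne_zero {f : ℝ → Rn n} (hf : ContDiff ℝ 1 f) (hinj : PerInjective f)
    (hreg : RegularCurve f) {w : ℝ} (hw : |w| < 1) (u : ℝ) : meanVelocity f u w ≠ 0 := by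
  intro h
  have hchord := sub_eq_smul_meanVelocity hf u w
  rw [h, smul_zero, sub_eq_zero, eq_comm] at hchord
  obtain ⟨k, hk⟩ := hinj _ _ hchord
  obtain rfl : w = k := by linarith
  have hk0 : k = 0 := Int.abs_lt_one_iff.1 (by exact_mod_cast hw)
  rw [hk0, Int.cast_zero, meanVelocity_zero_right] at h
  exact hreg u h

lemma exists_forall_le_norm_meanVelocity {f : ℝ → Rn n} (hf : ContDiff ℝ 1 f)
    (hper : Function.Periodic f 1) (hinj : PerInjective f) (hreg : RegularCurve f) :
    ∃ c > 0, ∀ u w, |w| ≤ 1 / 2 → c ≤ ‖meanVelocity f u w‖ := by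
  obtain ⟨z, hz, hmin⟩ :=
    (isCompact_Icc (a := (0 : ℝ)) (b := 1)).prod (isCompact_closedBall (0 : ℝ) (1 / 2))
      |>.exists_isMinOn ⟨(0, 0), by simp⟩
        (continuous_meanVelocity (hf.continuous_deriv le_rfl)).norm.continuousOn
  have hz2 : |z.2| ≤ 1 / 2 := mem_closedBall_zero_iff.1 hz.2
  refine ⟨_, norm_pos_iff.2 (meanVelocity_ne_zero hf hinj hreg
    (hz2.trans_lt one_half_lt_one) z.1), fun u w hw => ?_⟩
  obtain ⟨v, hv, huv⟩ := (periodic_meanVelocity hper w).exists_mem_Ico₀ zero_lt_one u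
  rw [huv]
  exact isMinOn_iff.1 hmin (v, w) ⟨Ico_subset_Icc_self hv, mem_closedBall_zero_iff.2 hw⟩

lemma exists_biLipschitzCurve_of_norm_deriv_sub_le {f₀ : ℝ → Rn n} (h₀ : ContDiff ℝ 1 f₀)
    (hper₀ : Function.Periodic f₀ 1) (hinj : PerInjective f₀) (hreg : RegularCurve f₀) :
    ∃ c > 0, ∃ M > 0, ∀ f, ContDiff ℝ 1 f → Function.Periodic f 1 →
      (∀ u, ‖deriv f u - deriv f₀ u‖ ≤ c) → BiLipschitzCurve c M f := by
  have hd₀ := h₀.continuous_deriv le_rfl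
  obtain ⟨c, hc, hmean⟩ := exists_forall_le_norm_meanVelocity h₀ hper₀ hinj hreg
  obtain ⟨M, hM⟩ := isBounded_iff_forall_norm_le.1
    ((periodic_deriv hper₀).isBounded_of_continuous one_ne_zero hd₀)
  have hM0 : 0 ≤ M := (norm_nonneg _).trans (hM _ (mem_range_self 0))
  refine ⟨c / 2, half_pos hc, M + c / 2, by positivity,
    fun f hf hper hclose => ⟨hf, hper, ?_, ?_⟩⟩
  · intro u w hw
    have hdiff := norm_meanVelocity_sub_le (hf.continuous_deriv le_rfl) hd₀ hclose u w
    have htri := norm_le_norm_add_norm_sub (meanVelocity f u w) (meanVelocity f₀ u w)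
    linarith [hmean u w hw]
  · intro u
    have htri := norm_le_norm_add_norm_sub' (deriv f u) (deriv f₀ u)
    linarith [hM _ (mem_range_self u), hclose u]

end BiLipschitz

section ArcLength

variable {f : ℝ → Rn n} {c M : ℝ}

lemma arcLen_eq_mul_integral_norm (f : ℝ → Rn n) (u w : ℝ) :
    arcLen f u w = |w| * ∫ s in Ioc (0 : ℝ) 1, ‖deriv f (u + s * w)‖ := by
  have h := intervalIntegral.smul_integral_comp_add_mul (a := 0) (b := 1)
    (fun v => ‖deriv f v‖) w u
  rw [mul_zero, mul_one, add_zero, smul_eq_mul, intervalIntegral.integral_of_le zero_le_one] at h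
  simp only [mul_comm w] at h
  rw [arcLen, ← h, abs_mul, abs_of_nonneg (integral_nonneg fun _ => norm_nonneg _),
    mul_comm]

lemma arcLen_add_neg (f : ℝ → Rn n) (u w : ℝ) : arcLen f (u + w) (-w) = arcLen f u w := by
  rw [arcLen, arcLen, add_neg_cancel_right, intervalIntegral.integral_symm, abs_neg]

lemma idist_add_neg (f : ℝ → Rn n) (u w : ℝ) : idist f (u + w) (-w) = idist f u w := by
  rw [idist, idist, arcLen_add_neg]

lemma arcLen_le (hM : ∀ u, ‖deriv f u‖ ≤ M) (u w : ℝ) : arcLen f u w ≤ M * |w| := by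
  have := intervalIntegral.norm_integral_le_of_norm_le_const (a := u) (b := u + w) (C := M)
    (f := fun v => ‖deriv f v‖) fun v _ => by simpa using hM v
  simpa [arcLen] using this

lemma le_curveLen (hf : Continuous (deriv f)) (hc : ∀ u, c ≤ ‖deriv f u‖) : c ≤ curveLen f := by
  have := intervalIntegral.integral_mono_on (a := 0) (b := 1) (f := fun _ => c)
    (g := fun v => ‖deriv f v‖) (μ := volume) zero_le_one (by simp)
    (hf.norm.intervalIntegrable _ _) fun u _ => hc u
  simpa [curveLen] using this

lemma integral_norm_deriv_eq_curveLen (hper : Function.Periodic f 1) (u : ℝ) :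
    ∫ v in u..(u + 1), ‖deriv f v‖ = curveLen f := by
  have hper' : Function.Periodic (fun v => ‖deriv f v‖) 1 := (periodic_deriv hper).comp _
  rw [hper'.intervalIntegral_add_eq u 0, zero_add, curveLen]

namespace BiLipschitzCurve

lemma idist_eq_arcLen (hf : BiLipschitzCurve c M f) {w : ℝ} (hw : 2 * M * |w| ≤ c) (u : ℝ) :
    idist f u w = arcLen f u w := by
  have := le_curveLen hf.continuous_deriv hf.le_norm_deriv
  have := arcLen_le hf.norm_deriv_le u w
  exact min_eq_left (by linarith)

lemma idist_pos (hf : BiLipschitzCurve c M f) (hc : 0 < c) {w : ℝ} (hw0 : w ≠ 0) (hw : |w| < 1)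
    (u : ℝ) : 0 < idist f u w := by
  wlog hpos : 0 < w generalizing u w
  · rw [← idist_add_neg]
    exact this (neg_ne_zero.2 hw0) (by rwa [abs_neg]) _ (by grind)
  have hint : ∀ a b, IntervalIntegrable (fun v => ‖deriv f v‖) volume a b := fun a b =>
    hf.continuous_deriv.norm.intervalIntegrable a b
  have hlen : ∀ a b : ℝ, a < b → 0 < ∫ v in a..b, ‖deriv f v‖ := fun a b =>
    intervalIntegral.intervalIntegral_pos_of_pos (hint a b)
      fun v => hc.trans_le (hf.le_norm_deriv v)
  have harc := hlen u (u + w) (by linarith)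
  rw [idist, arcLen, abs_of_pos harc, ← integral_norm_deriv_eq_curveLen hf.periodic u,
    intervalIntegral.integral_interval_sub_left (hint _ _) (hint _ _)]
  exact lt_min harc (hlen _ _ (by linarith [(abs_lt.1 hw).2]))

end BiLipschitzCurve

end ArcLength

section Energy

lemma measurableSet_Wset (ε : ℝ) : MeasurableSet (Wset ε) :=
  measurableSet_Icc.union measurableSet_Icc

lemma isCompact_Wset (ε : ℝ) : IsCompact (Wset ε) := isCompact_Icc.union isCompact_Icc

lemma Wset_subset_Wset {ε₁ ε₂ : ℝ} (h : ε₁ ≤ ε₂) : Wset ε₂ ⊆ Wset ε₁ :=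
  union_subset_union (Icc_subset_Icc le_rfl (neg_le_neg h)) (Icc_subset_Icc h le_rfl)

lemma mem_Wset_iff {ε w : ℝ} (hε : 0 < ε) : w ∈ Wset ε ↔ ε ≤ |w| ∧ |w| ≤ 1 / 2 := by
  simp only [Wset, mem_union, mem_Icc]
  grind

lemma abs_lt_of_mem_Wset_sdiff {ε₁ ε₂ w : ℝ} (hε₁ : 0 < ε₁) (hw : w ∈ Wset ε₁ \ Wset ε₂) :
    w ≠ 0 ∧ |w| < ε₂ := by
  simp only [Wset, Set.mem_sdiff, mem_union, mem_Icc] at hw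
  grind

variable {f g : ℝ → Rn n} {α c M : ℝ}

lemma continuous_arcLen (hf : Continuous (deriv f)) :
    Continuous fun z : ℝ × ℝ => arcLen f z.1 z.2 := by
  simp only [arcLen_eq_mul_integral_norm, ← intervalIntegral.integral_of_le (zero_le_one' ℝ)]
  exact continuous_snd.abs.mul
    (intervalIntegral.continuous_parametric_intervalIntegral_of_continuous' (by fun_prop) 0 1)

lemma continuous_idist (hf : Continuous (deriv f)) :
    Continuous fun z : ℝ × ℝ => idist f z.1 z.2 :=
  (continuous_arcLen hf).min (continuous_const.sub (continuous_arcLen hf))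

lemma ohIntegrand_eq_powGap_div (hf : ContDiff ℝ 1 f) {u w : ℝ}
    (h : idist f u w = arcLen f u w) :
    ohIntegrand α f u w = powGap α (volume.restrict (Ioc (0 : ℝ) 1)) (fun s => deriv f (u + s * w))
      * (‖deriv f (u + w)‖ * ‖deriv f u‖) / |w| ^ α := by
  rw [ohIntegrand, h, arcLen_eq_mul_integral_norm, sub_eq_smul_meanVelocity hf, norm_smul,
    Real.norm_eq_abs, Real.mul_rpow (abs_nonneg _) (norm_nonneg _),
    Real.mul_rpow (abs_nonneg _) (integral_nonneg fun _ => norm_nonneg _), powGap, meanVelocity]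
  simp only [one_div, mul_inv]
  ring

namespace BiLipschitzCurve

lemma continuousOn_ohIntegrand (hα : 0 ≤ α) (hc : 0 < c) (hf : BiLipschitzCurve c M f) {ε : ℝ}
    (hε : 0 < ε) :
    ContinuousOn (fun z : ℝ × ℝ => ohIntegrand α f z.1 z.2) (univ ×ˢ Wset ε) := by
  have hf0 := hf.contDiff.continuous
  have hf1 := hf.continuous_deriv
  have hchord : Continuous fun z : ℝ × ℝ => ‖f (z.1 + z.2) - f z.1‖ := by fun_prop
  have hspeed : Continuous fun z : ℝ × ℝ => ‖deriv f (z.1 + z.2)‖ := by fun_prop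
  refine ContinuousOn.mul (ContinuousOn.mul (ContinuousOn.sub ?_ ?_) hspeed.continuousOn)
    (hf1.comp continuous_fst).norm.continuousOn
  · refine continuousOn_const.div (hchord.rpow_const fun _ => Or.inr hα).continuousOn
      fun z hz => (Real.rpow_pos_of_pos ?_ _).ne'
    obtain ⟨hεw, hw⟩ := (mem_Wset_iff hε).1 hz.2
    exact (mul_pos hc (hε.trans_le hεw)).trans_le (hf.mul_abs_le_norm_sub hw _)
  · refine continuousOn_const.div
      ((continuous_idist hf1).rpow_const fun _ => Or.inr hα).continuousOn
      fun z hz => (Real.rpow_pos_of_pos ?_ _).ne'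
    obtain ⟨hεw, hw⟩ := (mem_Wset_iff hε).1 hz.2
    exact hf.idist_pos hc (abs_pos.1 (hε.trans_le hεw)) (hw.trans_lt one_half_lt_one) _

lemma integrableOn_ohIntegrand (hα : 0 ≤ α) (hc : 0 < c) (hf : BiLipschitzCurve c M f) {ε : ℝ}
    (hε : 0 < ε) :
    IntegrableOn (fun z : ℝ × ℝ => ohIntegrand α f z.1 z.2) (Ioc (0 : ℝ) 1 ×ˢ Wset ε) :=
  (((hf.continuousOn_ohIntegrand hα hc hε).mono
    (prod_mono (subset_univ (Icc (0 : ℝ) 1)) le_rfl)).integrableOn_compact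
    (isCompact_Icc.prod (isCompact_Wset ε))).mono_set (prod_mono Ioc_subset_Icc_self le_rfl)

lemma oharaEeps_sub_eq (hα : 0 ≤ α) (hc : 0 < c) (hf : BiLipschitzCurve c M f) {ε₁ ε₂ : ℝ}
    (hε₁ : 0 < ε₁) (hε : ε₁ ≤ ε₂) :
    oharaEeps α ε₁ f - oharaEeps α ε₂ f =
      ∫ z in Ioc (0 : ℝ) 1 ×ˢ (Wset ε₁ \ Wset ε₂), ohIntegrand α f z.1 z.2 := by
  have hint₁ := hf.integrableOn_ohIntegrand hα hc hε₁
  have hint₂ := hf.integrableOn_ohIntegrand hα hc (hε₁.trans_le hε)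
  have hset : Ioc (0 : ℝ) 1 ×ˢ (Wset ε₁ \ Wset ε₂) =
      Ioc (0 : ℝ) 1 ×ˢ Wset ε₁ \ Ioc (0 : ℝ) 1 ×ˢ Wset ε₂ := by grind
  rw [hset, setIntegral_sdiff (measurableSet_Ioc.prod (measurableSet_Wset _)) hint₁
    (prod_mono le_rfl (Wset_subset_Wset hε)), oharaEeps, oharaEeps]
  exact congrArg₂ _ (setIntegral_prod _ hint₁).symm (setIntegral_prod _ hint₂).symm

lemma isNondegenerate (hf : BiLipschitzCurve c M f) {w : ℝ} (hw : |w| ≤ 1 / 2) (u : ℝ) :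
    IsNondegenerate c M (volume.restrict (Ioc (0 : ℝ) 1)) fun s => deriv f (u + s * w) where
  aestronglyMeasurable := by
    have := hf.continuous_deriv
    exact Continuous.aestronglyMeasurable (by fun_prop)
  le_norm := Eventually.of_forall fun _ => hf.le_norm_deriv _
  norm_le := Eventually.of_forall fun _ => hf.norm_deriv_le _
  le_norm_integral := hf.le_norm_meanVelocity u w hw

end BiLipschitzCurve

lemma abs_mul_sub_mul_le (x y x' y' : ℝ) :
    |x * y - x' * y'| ≤ |x - x'| * |y| + |x'| * |y - y'| :=
  calc |x * y - x' * y'| = |(x - x') * y + x' * (y - y')| := by ring_nf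
    _ ≤ |x - x'| * |y| + |x'| * |y - y'| := by
      rw [← abs_mul, ← abs_mul]
      exact abs_add_le _ _

lemma abs_norm_mul_norm_sub_le {E : Type*} [NormedAddCommGroup E] {x y x' y' : E} {M N : ℝ}
    (hy : ‖y‖ ≤ M) (hx' : ‖x'‖ ≤ M) (hxx' : ‖x - x'‖ ≤ N) (hyy' : ‖y - y'‖ ≤ N) :
    |‖x‖ * ‖y‖ - ‖x'‖ * ‖y'‖| ≤ 2 * M * N := by
  have hN := (norm_nonneg _).trans hxx'
  calc |‖x‖ * ‖y‖ - ‖x'‖ * ‖y'‖| ≤ |‖x‖ - ‖x'‖| * ‖y‖ + ‖x'‖ * |‖y‖ - ‖y'‖| := by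
        simpa only [abs_norm] using abs_mul_sub_mul_le ‖x‖ ‖y‖ ‖x'‖ ‖y'‖
    _ ≤ N * M + M * N := by
      gcongr
      exacts [(abs_norm_sub_norm_le _ _).trans hxx', (norm_nonneg _).trans hx',
        (abs_norm_sub_norm_le _ _).trans hyy']
    _ = 2 * M * N := by ring

lemma exists_abs_powGap_mul_sub_le (hα : 0 ≤ α) (hc : 0 < c) (hM : 0 ≤ M) :
    ∃ C, 0 ≤ C ∧ ∀ {f g : ℝ → Rn n}, BiLipschitzCurve c M f → BiLipschitzCurve c M g →
      ∀ {N l}, 0 < l → (∀ u, ‖deriv f u - deriv g u‖ ≤ N) → ∀ {w}, |w| ≤ 1 / 2 → ∀ u,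
        |powGap α (volume.restrict (Ioc (0 : ℝ) 1)) (fun s => deriv f (u + s * w)) *
            (‖deriv f (u + w)‖ * ‖deriv f u‖) -
          powGap α (volume.restrict (Ioc (0 : ℝ) 1)) (fun s => deriv g (u + s * w)) *
            (‖deriv g (u + w)‖ * ‖deriv g u‖)| ≤
          C * l * oscSq (deriv f - deriv g) u w +
            C * (l * N ^ 2 + 1 / l) * (oscSq (deriv f) u w + oscSq (deriv g) u w) := by
  obtain ⟨C₁, hC₁, hsub⟩ := exists_abs_powGap_sub_le
    (μ := volume.restrict (Ioc (0 : ℝ) 1)) (E := Rn n) hα hc hM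
  obtain ⟨C₂, hC₂, hle⟩ := exists_abs_powGap_le
    (μ := volume.restrict (Ioc (0 : ℝ) 1)) (E := Rn n) hα hc
  refine ⟨C₁ * M ^ 2 + C₂ * (2 * M), by positivity, ?_⟩
  intro f g hf hg N l hl hfg w hw u
  set F := powGap α (volume.restrict (Ioc (0 : ℝ) 1)) (fun s => deriv f (u + s * w))
  set G := powGap α (volume.restrict (Ioc (0 : ℝ) 1)) (fun s => deriv g (u + s * w))
  set D := oscSq (deriv f - deriv g) u w
  set S := oscSq (deriv f) u w + oscSq (deriv g) u w
  have hFG : |F - G| ≤ C₁ * (l * (D + N ^ 2 * S) + S / l) := by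
    have h := hsub (hf.isNondegenerate hw u) (hg.isNondegenerate hw u) hl
      (Eventually.of_forall fun s => hfg (u + s * w)) (hfg u)
    simpa only [oscSq, Pi.sub_apply, sub_sub_sub_comm, D, S] using h
  have hG : |G| ≤ C₂ * S := (hle (hg.isNondegenerate hw u) (deriv g u)).trans
    (mul_le_mul_of_nonneg_left (le_add_of_nonneg_left (oscSq_nonneg _ _ _)) hC₂)
  have hspeed := abs_norm_mul_norm_sub_le (hf.norm_deriv_le u) (hg.norm_deriv_le (u + w))
    (hfg (u + w)) (hfg u)
  have hmass : |‖deriv f (u + w)‖ * ‖deriv f u‖| ≤ M ^ 2 := by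
    rw [abs_mul, abs_norm, abs_norm, sq]
    gcongr <;> exact hf.norm_deriv_le _
  have hS : 0 ≤ S := add_nonneg (oscSq_nonneg _ _ _) (oscSq_nonneg _ _ _)
  have hD : 0 ≤ D := oscSq_nonneg _ _ _
  calc _ ≤ |F - G| * |‖deriv f (u + w)‖ * ‖deriv f u‖| + |G| * |‖deriv f (u + w)‖ * ‖deriv f u‖ -
          ‖deriv g (u + w)‖ * ‖deriv g u‖| := abs_mul_sub_mul_le _ _ _ _
    _ ≤ C₁ * (l * (D + N ^ 2 * S) + S / l) * M ^ 2 + C₂ * S * (2 * M * N) := by gcongr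
    _ ≤ C₁ * (l * (D + N ^ 2 * S) + S / l) * M ^ 2 + C₂ * S * (2 * M * (l * N ^ 2 + 1 / l)) +
          C₂ * (2 * M) * l * D := by
      refine le_add_of_le_of_nonneg ?_ (by positivity)
      gcongr
      exact le_mul_sq_add_one_div hl N
    _ = _ := by ring

lemma exists_abs_ohIntegrand_sub_le (hα : 0 ≤ α) (hc : 0 < c) (hM : 0 ≤ M) :
    ∃ C, 0 ≤ C ∧ ∀ {f g : ℝ → Rn n}, BiLipschitzCurve c M f → BiLipschitzCurve c M g →
      ∀ {N l}, 0 < l → (∀ u, ‖deriv f u - deriv g u‖ ≤ N) → ∀ {w}, w ≠ 0 → 2 * M * |w| ≤ c → ∀ u,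
        |ohIntegrand α f u w - ohIntegrand α g u w| ≤
          (C * l * oscSq (deriv f - deriv g) u w +
            C * (l * N ^ 2 + 1 / l) * (oscSq (deriv f) u w + oscSq (deriv g) u w)) / |w| ^ α := by
  obtain ⟨C, hC, hbound⟩ := exists_abs_powGap_mul_sub_le (n := n) hα hc hM
  refine ⟨C, hC, fun hf hg N l hl hfg w hw0 hw u => ?_⟩
  have hwhalf : |w| ≤ 1 / 2 := by
    have : M * (2 * |w|) ≤ M * 1 := by linarith [hf.le]
    linarith [le_of_mul_le_mul_left this (hc.trans_le hf.le)]
  rw [ohIntegrand_eq_powGap_div hf.contDiff (hf.idist_eq_arcLen hw u),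
    ohIntegrand_eq_powGap_div hg.contDiff (hg.idist_eq_arcLen hw u), ← sub_div, abs_div,
    abs_of_pos (Real.rpow_pos_of_pos (abs_pos.2 hw0) α)]
  gcongr
  exact hbound hf hg hl hfg hwhalf u

lemma BiLipschitzCurve.ofReal_abs_oharaEeps_sub_sub_le (hα : 0 ≤ α) (hc : 0 < c)
    (hf : BiLipschitzCurve c M f) (hg : BiLipschitzCurve c M g) {ε₁ ε₂ : ℝ} (hε₁ : 0 < ε₁)
    (hε : ε₁ ≤ ε₂) :
    ENNReal.ofReal |(oharaEeps α ε₁ f - oharaEeps α ε₂ f) -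
        (oharaEeps α ε₁ g - oharaEeps α ε₂ g)| ≤
      ∫⁻ z in Ioc (0 : ℝ) 1 ×ˢ (Wset ε₁ \ Wset ε₂),
        ENNReal.ofReal |ohIntegrand α f z.1 z.2 - ohIntegrand α g z.1 z.2| := by
  have hint : ∀ {f : ℝ → Rn n}, BiLipschitzCurve c M f →
      IntegrableOn (fun z : ℝ × ℝ => ohIntegrand α f z.1 z.2)
        (Ioc (0 : ℝ) 1 ×ˢ (Wset ε₁ \ Wset ε₂)) := fun hf =>
    (hf.integrableOn_ohIntegrand hα hc hε₁).mono_set (prod_mono le_rfl sdiff_subset)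
  rw [hf.oharaEeps_sub_eq hα hc hε₁ hε, hg.oharaEeps_sub_eq hα hc hε₁ hε,
    ← integral_sub (hint hf) (hint hg)]
  simp only [← Real.enorm_eq_ofReal_abs]
  exact enorm_integral_le_lintegral_enorm _

lemma exists_ofReal_abs_oharaEeps_sub_sub_le (hα : 1 ≤ α) (hc : 0 < c) (hM : 0 ≤ M) :
    ∃ C, 0 ≤ C ∧ ∀ {f g : ℝ → Rn n}, BiLipschitzCurve c M f → BiLipschitzCurve c M g →
      ∀ {N l}, 0 < l → (∀ u, ‖deriv f u - deriv g u‖ ≤ N) →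
        ∀ {ε₁ ε₂}, 0 < ε₁ → ε₁ ≤ ε₂ → 2 * M * ε₂ ≤ c →
          ENNReal.ofReal |(oharaEeps α ε₁ f - oharaEeps α ε₂ f) -
              (oharaEeps α ε₁ g - oharaEeps α ε₂ g)| ≤
            ENNReal.ofReal (C * l) * gagliardoNear α ε₂ (deriv f - deriv g) +
              ENNReal.ofReal (C * (l * N ^ 2 + 1 / l)) *
                (gagliardoNear α ε₂ (deriv f) + gagliardoNear α ε₂ (deriv g)) := by
  have hα0 : 0 ≤ α := zero_le_one.trans hα
  obtain ⟨C, hC, hbound⟩ := exists_abs_ohIntegrand_sub_le (n := n) hα0 hc hM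
  refine ⟨C, hC, fun {f g} hf hg N l hl hfg ε₁ ε₂ hε₁ hε hε₂ => ?_⟩
  have hf' := hf.continuous_deriv
  have hg' := hg.continuous_deriv
  refine (hf.ofReal_abs_oharaEeps_sub_sub_le hα0 hc hg hε₁ hε).trans (le_trans ?_
    (lintegral_mul_oscSq_add_div_le hα (hf'.sub hg') hf' hg' (by positivity) (by positivity)))
  refine (setLIntegral_mono' (measurableSet_Ioc.prod
    ((measurableSet_Wset _).diff (measurableSet_Wset _))) fun z hz => ?_).trans
    (lintegral_mono_set (prod_mono le_rfl fun w hw =>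
      abs_lt.1 (abs_lt_of_mem_Wset_sdiff hε₁ hw).2))
  obtain ⟨hz0, hz2⟩ := abs_lt_of_mem_Wset_sdiff hε₁ hz.2
  refine ENNReal.ofReal_le_ofReal (hbound hf hg hl hfg hz0 (le_trans ?_ hε₂) z.1)
  gcongr

end Energy

section Sobolev

variable {α ε σ N : ℝ} {f g : ℝ → Rn n}

lemma H1Norm_nonneg (σ : ℝ) (f : ℝ → Rn n) : 0 ≤ H1Norm σ f :=
  add_nonneg (Real.sqrt_nonneg _) (Real.sqrt_nonneg _)

lemma gagliardoNear_le_ofReal_sq (hf : gagliardoNear α ε (deriv f) ≠ ⊤)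
    (h : √(gagliardoNear α ε (deriv f)).toReal ≤ N) :
    gagliardoNear α ε (deriv f) ≤ ENNReal.ofReal (N ^ 2) := by
  rw [← ENNReal.ofReal_toReal hf]
  exact ENNReal.ofReal_le_ofReal (Real.sqrt_le_iff.1 h).2

namespace MemH1

lemma contDiff (hf : MemH1 σ f) : ContDiff ℝ 1 f := hf.2.1

lemma continuous_deriv (hf : MemH1 σ f) : Continuous (deriv f) :=
  hf.contDiff.continuous_deriv le_rfl

lemma deriv_sub (hf : MemH1 σ f) (hg : MemH1 σ g) : deriv (f - g) = deriv f - deriv g := by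
  ext1 u
  exact _root_.deriv_sub (hf.contDiff.differentiable one_ne_zero).differentiableAt
    (hg.contDiff.differentiable one_ne_zero).differentiableAt

lemma sub (hf : MemH1 σ f) (hg : MemH1 σ g) : MemH1 σ (f - g) := by
  obtain ⟨α, rfl⟩ : ∃ α, σ = (α - 1) / 2 := ⟨1 + 2 * σ, by ring⟩
  refine ⟨hf.1.sub hg.1, hf.contDiff.sub hg.contDiff, ?_⟩
  have hfin := And.intro hf.2.2 hg.2.2
  rw [gagliardoSq_eq_gagliardoNear, gagliardoSq_eq_gagliardoNear] at hfin
  rw [hf.deriv_sub hg, gagliardoSq_eq_gagliardoNear]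
  refine (gagliardoNear_sub_le hf.continuous_deriv hg.continuous_deriv).trans_lt ?_
  exact ENNReal.add_lt_top.2
    ⟨ENNReal.mul_lt_top ENNReal.ofNat_lt_top hfin.1, ENNReal.mul_lt_top ENNReal.ofNat_lt_top hfin.2⟩

lemma gagliardoNear_ne_top (hf : MemH1 ((α - 1) / 2) f) (hε : ε ≤ 1 / 2) :
    gagliardoNear α ε (deriv f) ≠ ⊤ :=
  ((gagliardoNear_mono hε _).trans_lt (gagliardoSq_eq_gagliardoNear α (deriv f) ▸ hf.2.2)).ne

lemma gagliardoNear_le (hf : MemH1 ((α - 1) / 2) f) (hN : H1Norm ((α - 1) / 2) f ≤ N) :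
    gagliardoNear α (1 / 2) (deriv f) ≤ ENNReal.ofReal (N ^ 2) := by
  refine gagliardoNear_le_ofReal_sq (hf.gagliardoNear_ne_top le_rfl) ?_
  rw [← gagliardoSq_eq_gagliardoNear]
  exact (le_add_of_nonneg_left (Real.sqrt_nonneg _)).trans hN

lemma integral_norm_deriv_sq_le (hf : MemH1 σ f) (hN : H1Norm σ f ≤ N) :
    ∫ u in Ioc (0 : ℝ) 1, ‖deriv f u‖ ^ 2 ≤ N ^ 2 := by
  have hL2 : √(∫ u in Ioc (0 : ℝ) 1, (‖f u‖ ^ 2 + ‖deriv f u‖ ^ 2)) ≤ N :=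
    (le_add_of_nonneg_right (Real.sqrt_nonneg _)).trans hN
  refine le_trans ?_ (Real.sqrt_le_iff.1 hL2).2
  have := hf.contDiff.continuous
  have := hf.continuous_deriv
  exact integral_mono (Continuous.integrableOn_Ioc (by fun_prop))
    (Continuous.integrableOn_Ioc (by fun_prop)) fun u => le_add_of_nonneg_left (sq_nonneg _)

lemma norm_deriv_le (hα : 2 < α) (hf : MemH1 ((α - 1) / 2) f) (hN0 : 0 < N)
    (hN : H1Norm ((α - 1) / 2) f ≤ N) (u : ℝ) : ‖deriv f u‖ ≤ (3 + 1 / (α - 2)) * N :=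
  norm_le_of_gagliardoNear_le hα hf.continuous_deriv (periodic_deriv hf.1) hN0
    (hf.gagliardoNear_le hN) (hf.integral_norm_deriv_sq_le hN) u

end MemH1

lemma exists_biLipschitzCurve_of_H1Norm_sub_lt (hα : 2 < α) {γ₀ : ℝ → Rn n}
    (hγ₀ : MemH1 ((α - 1) / 2) γ₀) (hinj : PerInjective γ₀) (hreg : RegularCurve γ₀) :
    ∃ r > 0, ∃ c > 0, ∃ M > 0, ∀ {γ}, MemH1 ((α - 1) / 2) γ →
      H1Norm ((α - 1) / 2) (γ - γ₀) < r → BiLipschitzCurve c M γ := by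
  obtain ⟨c, hc, M, hM, hC1⟩ :=
    exists_biLipschitzCurve_of_norm_deriv_sub_le hγ₀.contDiff hγ₀.1 hinj hreg
  have hK : 0 < 3 + 1 / (α - 2) := by
    have := sub_pos.2 hα
    positivity
  have hr : 0 < c / (3 + 1 / (α - 2)) := by positivity
  refine ⟨_, hr, c, hc, M, hM, fun {γ} hγ hγr => hC1 γ hγ.contDiff hγ.1 fun u => ?_⟩
  have h := (hγ.sub hγ₀).norm_deriv_le hα hr hγr.le u
  rwa [hγ.deriv_sub hγ₀, mul_div_cancel₀ _ hK.ne'] at h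

end Sobolev

section Lipschitz

variable {α c M : ℝ}

lemma exists_abs_oharaEeps_sub_sub_le_of_H1Norm_lt (hα : 2 < α) (hc : 0 < c) (hM : 0 ≤ M) :
    ∃ C, 0 ≤ C ∧ ∀ {f g : ℝ → Rn n}, BiLipschitzCurve c M f → BiLipschitzCurve c M g →
      MemH1 ((α - 1) / 2) f → MemH1 ((α - 1) / 2) g →
      ∀ {e θ}, e ≤ 1 / 2 → 2 * M * e ≤ c → 0 < θ → θ ≤ 2 →
        gagliardoNear α e (deriv f) ≤ ENNReal.ofReal (θ ^ 2) →
        gagliardoNear α e (deriv g) ≤ ENNReal.ofReal (θ ^ 2) →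
        ∀ {ε₁ ε₂}, 0 < ε₁ → ε₁ ≤ ε₂ → ε₂ ≤ e → ∀ {N}, H1Norm ((α - 1) / 2) (f - g) < N →
          |(oharaEeps α ε₁ f - oharaEeps α ε₂ f) - (oharaEeps α ε₁ g - oharaEeps α ε₂ g)| ≤
            C * θ * N := by
  obtain ⟨C, hC, hbound⟩ := exists_ofReal_abs_oharaEeps_sub_sub_le (n := n)
    (one_le_two.trans hα.le) hc hM
  set K := 3 + 1 / (α - 2)
  refine ⟨C * (3 + 8 * K ^ 2), by positivity, ?_⟩
  intro f g hf hg hfH hgH e θ he heM hθ hθ2 hθf hθg ε₁ ε₂ hε₁ hε hεe N hN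
  have hN0 : 0 < N := (H1Norm_nonneg _ _).trans_lt hN
  have hsup : ∀ u, ‖deriv f u - deriv g u‖ ≤ K * N := fun u => by
    simpa only [hfH.deriv_sub hgH, Pi.sub_apply] using (hfH.sub hgH).norm_deriv_le hα hN0 hN.le u
  have hθfg : gagliardoNear α ε₂ (deriv f - deriv g) ≤ ENNReal.ofReal (N ^ 2) := by
    rw [← hfH.deriv_sub hgH]
    exact (gagliardoNear_mono (hεe.trans he) _).trans ((hfH.sub hgH).gagliardoNear_le hN.le)
  have hε₂M : 2 * M * ε₂ ≤ c := le_trans (by gcongr) heM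
  rw [← ENNReal.ofReal_le_ofReal_iff (by positivity)]
  calc _ ≤ _ := hbound hf hg (div_pos hθ hN0) hsup hε₁ hε hε₂M
    _ ≤ ENNReal.ofReal (C * (θ / N)) * ENNReal.ofReal (N ^ 2) +
          ENNReal.ofReal (C * (θ / N * (K * N) ^ 2 + 1 / (θ / N))) *
            (ENNReal.ofReal (θ ^ 2) + ENNReal.ofReal (θ ^ 2)) := by
      gcongr
      exacts [(gagliardoNear_mono hεe _).trans hθf, (gagliardoNear_mono hεe _).trans hθg]
    _ = ENNReal.ofReal (C * (3 + 2 * K ^ 2 * θ ^ 2) * θ * N) := by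
      rw [← ENNReal.ofReal_add (by positivity) (by positivity),
        ← ENNReal.ofReal_mul (by positivity), ← ENNReal.ofReal_mul (by positivity),
        ← ENNReal.ofReal_add (by positivity) (by positivity)]
      congr 1
      field_simp
      ring
    _ ≤ ENNReal.ofReal (C * (3 + 2 * K ^ 2 * 2 ^ 2) * θ * N) := by gcongr
    _ = _ := by ring_nf

lemma exists_abs_oharaEeps_sub_sub_le_H1Norm (hα : 2 < α) (hc : 0 < c) (hM : 0 ≤ M) :
    ∃ C, 0 ≤ C ∧ ∀ {f g : ℝ → Rn n}, BiLipschitzCurve c M f → BiLipschitzCurve c M g →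
      MemH1 ((α - 1) / 2) f → MemH1 ((α - 1) / 2) g →
      ∀ {e θ}, e ≤ 1 / 2 → 2 * M * e ≤ c → 0 < θ → θ ≤ 2 →
        gagliardoNear α e (deriv f) ≤ ENNReal.ofReal (θ ^ 2) →
        gagliardoNear α e (deriv g) ≤ ENNReal.ofReal (θ ^ 2) →
        ∀ {ε₁ ε₂}, ε₁ ∈ Ioo 0 e → ε₂ ∈ Ioo 0 e →
          |(oharaEeps α ε₁ f - oharaEeps α ε₂ f) - (oharaEeps α ε₁ g - oharaEeps α ε₂ g)| ≤
            C * θ * H1Norm ((α - 1) / 2) (f - g) := by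
  obtain ⟨C, hC, hbound⟩ := exists_abs_oharaEeps_sub_sub_le_of_H1Norm_lt (n := n) hα hc hM
  refine ⟨C, hC, ?_⟩
  intro f g hf hg hfH hgH e θ he heM hθ hθ2 hθf hθg ε₁ ε₂ hε₁ hε₂
  wlog hle : ε₁ ≤ ε₂ generalizing ε₁ ε₂
  · rw [← abs_neg]
    convert this hε₂ hε₁ (le_of_not_ge hle) using 2
    ring
  refine ge_of_tendsto (x := 𝓝[>] H1Norm ((α - 1) / 2) (f - g))
    (continuous_const_mul (C * θ)).continuousWithinAt ?_
  filter_upwards [self_mem_nhdsWithin] with N hN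
  exact hbound hf hg hfH hgH he heM hθ hθ2 hθf hθg hε₁.1 hle hε₂.2.le hN

end Lipschitz

lemma exists_pos_le_mul_le {a b c : ℝ} (ha : 0 ≤ a) (hb : 0 < b) (hc : 0 < c) :
    ∃ x > 0, x ≤ b ∧ a * x ≤ c := by
  refine ⟨min b (c / (a + 1)), by positivity, min_le_left _ _, ?_⟩
  calc a * min b (c / (a + 1)) ≤ (a + 1) * (c / (a + 1)) :=
        mul_le_mul (by linarith) (min_le_right _ _) (by positivity) (by positivity)
    _ = c := mul_div_cancel₀ _ (by positivity)

/-- (Lemma on near-Cauchy behaviour of the truncated energies.) Around an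
injective regular `γ₀ ∈ H^{(1+α)/2,2}` there are a ball `U` of radius `r` consisting of
injective regular curves and a constant `C` such that for every `δ ∈ [0,1]` and every set
`X_δ` with the uniform-integrability property, `limsup_{ε₁,ε₂→0} Lip_{U∩X_δ}(E^α_{ε₁} − E^α_{ε₂}) ≤ Cδ`. -/
theorem statement8 {n : ℕ} (hn : 2 ≤ n) {α : ℝ} (hα : α ∈ Ioo (2:ℝ) 3)
    {γ₀ : ℝ → Rn n} (hγ₀ : MemH1 ((α - 1) / 2) γ₀) (hinj : PerInjective γ₀)
    (hreg : RegularCurve γ₀) :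
    ∃ r > (0:ℝ), ∃ C : ℝ,
      -- the ball of radius `r` consists of injective regular curves
      (∀ γ : ℝ → Rn n, MemH1 ((α - 1) / 2) γ → H1Norm ((α - 1) / 2) (γ - γ₀) < r →
        PerInjective γ ∧ RegularCurve γ) ∧
      ∀ δ ∈ Icc (0:ℝ) 1, ∀ X : Set (ℝ → Rn n),
        (∀ γ ∈ X, MemH1 ((α - 1) / 2) γ) →
        -- `limsup_{ε→0} sup_{γ ∈ X} (∬_{(ℝ/ℤ)×[−ε,ε]} |γ'(u+w)−γ'(u)|²/|w|^α)^{1/2} ≤ δ`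
        (∀ η > (0:ℝ), ∃ ε' > (0:ℝ), ∀ ε ∈ Ioo (0:ℝ) ε', ∀ γ ∈ X,
          Real.sqrt ((∫⁻ u in Ioc (0:ℝ) 1, ∫⁻ w in Ioo (-ε) ε,
            ENNReal.ofReal (‖deriv γ (u + w) - deriv γ u‖ ^ 2 / |w| ^ α)).toReal)
              ≤ δ + η) →
        -- `limsup_{ε₁,ε₂→0} Lip_{U ∩ X}(E^α_{ε₁} − E^α_{ε₂}) ≤ C δ`
        ∀ η > (0:ℝ), ∃ ε' > (0:ℝ), ∀ ε₁ ∈ Ioo (0:ℝ) ε', ∀ ε₂ ∈ Ioo (0:ℝ) ε',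
          ∀ f ∈ X, ∀ g ∈ X,
            H1Norm ((α - 1) / 2) (f - γ₀) < r → H1Norm ((α - 1) / 2) (g - γ₀) < r →
            |(oharaEeps α ε₁ f - oharaEeps α ε₂ f) - (oharaEeps α ε₁ g - oharaEeps α ε₂ g)|
              ≤ (C * δ + η) * H1Norm ((α - 1) / 2) (f - g) := by
  obtain ⟨r, hr, c, hc, M, hM, hball⟩ :=
    exists_biLipschitzCurve_of_H1Norm_sub_lt hα.1 hγ₀ hinj hreg
  obtain ⟨C, hC, hlip⟩ := exists_abs_oharaEeps_sub_sub_le_H1Norm (n := n) hα.1 hc hM.le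
  refine ⟨r, hr, C, fun γ hγ hγr =>
    ⟨(hball hγ hγr).perInjective hc, (hball hγ hγr).regularCurve hc⟩, ?_⟩
  intro δ hδ X hX hXδ η hη
  obtain ⟨η₀, hη₀, hη₀1, hη₀C⟩ := exists_pos_le_mul_le hC one_pos hη
  obtain ⟨e, he, hsmall⟩ := hXδ η₀ hη₀
  obtain ⟨ε', hε', hε'le, hε'M⟩ := exists_pos_le_mul_le (mul_nonneg zero_le_two hM.le)
    (lt_min (half_pos he) one_half_pos) hc
  obtain ⟨hε'e, hε'2⟩ := le_min_iff.1 hε'le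
  have hnear : ∀ γ ∈ X, gagliardoNear α ε' (deriv γ) ≤ ENNReal.ofReal ((δ + η₀) ^ 2) :=
    fun γ hγ => gagliardoNear_le_ofReal_sq ((hX γ hγ).gagliardoNear_ne_top hε'2)
      (hsmall ε' ⟨hε', hε'e.trans_lt (half_lt_self he)⟩ γ hγ)
  refine ⟨ε', hε', fun ε₁ hε₁ ε₂ hε₂ f hf g hg hfr hgr => ?_⟩
  calc _ ≤ C * (δ + η₀) * H1Norm ((α - 1) / 2) (f - g) :=
        hlip (hball (hX f hf) hfr) (hball (hX g hg) hgr) (hX f hf) (hX g hg) hε'2 hε'M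
          (by linarith [hδ.1]) (by linarith [hδ.2]) (hnear f hf) (hnear g hg) hε₁ hε₂
    _ ≤ (C * δ + η) * H1Norm ((α - 1) / 2) (f - g) :=
        mul_le_mul_of_nonneg_right (by linarith) (H1Norm_nonneg _ _)

end
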